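/- arXiv:1704.05381 — 5 statements merged into one kernel-verified Lean document; each statement's English description precedes it below -/
import Mathlib

section
/- For every β with 0 < β < 1/4 there exist constants C < ∞ and ε₀ > 0 such that for every z ∈ bD and every 0 < ε < ε₀: ∫_{bD} | Δ(w, z+εN(z))^{−1} − Δ(w,z)^{−1} | dH³(w) ≤ C·ε^β. (The integrand is interpreted as +∞ at w = z, where Δ(w,z)=0.) -/
open MeasureTheory Complex
open scoped ENNReal

noncomputable section

/-- `ℂ²` with the Euclidean metric. -/
abbrev C2 := EuclideanSpace ℂ (Fin 2)

instance : MeasurableSpace C2 := borel _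
instance : BorelSpace C2 := ⟨rfl⟩

/-- The defining function `ρ(z) = |z₂|² + (Re z₁)² + (Im z₁)⁴ − 1`. -/
def rho (z : C2) : ℝ := ‖z 1‖ ^ 2 + (z 0).re ^ 2 + (z 0).im ^ 4 - 1

/-- The boundary `bD = {ρ = 0}`. -/
def bD : Set C2 := {z | rho z = 0}

/-- The Cauchy–Leray denominator
`Δ(w,z) = (u₁ − 2i v₁³)(w₁ − z₁) + conj(w₂)(w₂ − z₂)`. -/
def Delta (w z : C2) : ℂ :=
  (((w 0).re : ℂ) - 2 * I * ((w 0).im : ℂ) ^ 3) * (w 0 - z 0)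
    + (starRingEnd ℂ) (w 1) * (w 1 - z 1)
/-- The real gradient `∇ρ` of `ρ` on `ℝ⁴ ≅ ℂ²`, written as a vector in `ℂ²`:
`∇ρ(z) = (2u₁ + 4v₁³ i, 2z₂)`. -/
def gradRho (z : C2) : C2 :=
  (WithLp.equiv 2 (Fin 2 → ℂ)).symm
    ![(2 * (z 0).re : ℝ) + (4 * (z 0).im ^ 3 : ℝ) * I, 2 * z 1]

/-- The inward unit normal `N(z) = −∇ρ(z)/|∇ρ(z)|`. -/
def Nvec (z : C2) : C2 := (-‖gradRho z‖⁻¹ : ℝ) • gradRho z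

namespace Stmt7Aux

def co (w : C2) : Fin 4 → ℝ := ![(w 0).re, (w 0).im, (w 1).re, (w 1).im]

def pj (j : Fin 4) (w : C2) : Fin 3 → ℝ := fun i => co w (j.succAbove i)

def qq (w ζ : C2) : ℝ :=
  ((w 0).re - (ζ 0).re) ^ 2 + ((w 0).im - (ζ 0).im) ^ 4 / 3
    + ((w 1).re - (ζ 1).re) ^ 2 + ((w 1).im - (ζ 1).im) ^ 2

lemma rho_eq (w : C2) :
    rho w = (co w 0) ^ 2 + (co w 1) ^ 4 + (co w 2) ^ 2 + (co w 3) ^ 2 - 1 := by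
  have h : ‖w 1‖ ^ 2 = (w 1).re ^ 2 + (w 1).im ^ 2 := by
    rw [Complex.sq_norm, Complex.normSq_apply]; ring
  simp only [rho, h, co]
  simp
  ring

lemma co_bd {w : C2} (h : rho w ≤ 0) (i : Fin 4) : |co w i| ≤ 1 := by
  rw [rho_eq] at h
  have h0 := sq_nonneg (co w 0)
  have h1 := sq_nonneg (co w 1 ^ 2)
  have h2 := sq_nonneg (co w 2)
  have h3 := sq_nonneg (co w 3)
  rw [← sq_le_one_iff_abs_le_one]
  fin_cases i <;> simp only [Fin.zero_eta, Fin.mk_one, Fin.reduceFinMk] <;> nlinarith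

lemma dist_le (p q : C2) : dist p q ≤ |co p 0 - co q 0| + |co p 1 - co q 1|
    + |co p 2 - co q 2| + |co p 3 - co q 3| := by
  rw [EuclideanSpace.dist_eq, Fin.sum_univ_two]
  have h0 : dist (p 0) (q 0) ≤ |co p 0 - co q 0| + |co p 1 - co q 1| := by
    rw [Complex.dist_eq]
    exact (Complex.norm_le_abs_re_add_abs_im _).trans (by simp [co])
  have h1 : dist (p 1) (q 1) ≤ |co p 2 - co q 2| + |co p 3 - co q 3| := by
    rw [Complex.dist_eq]
    exact (Complex.norm_le_abs_re_add_abs_im _).trans (by simp [co])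
  have := dist_nonneg (x := p 0) (y := q 0)
  have := dist_nonneg (x := p 1) (y := q 1)
  refine Real.sqrt_le_iff.2 ⟨by positivity, ?_⟩
  calc _ ≤ (dist (p 0) (q 0) + dist (p 1) (q 1)) ^ 2 := by nlinarith
    _ ≤ _ := by
      apply pow_le_pow_left₀ (by positivity); linarith

lemma sq_diff {a b δ : ℝ} (ha : |a| ≤ 1) (hb : |b| ≤ 1) (h : |a - b| ≤ δ) :
    |a ^ 2 - b ^ 2| ≤ 2 * δ := by
  have : a ^ 2 - b ^ 2 = (a + b) * (a - b) := by ring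
  rw [this, abs_mul]
  have h2 : |a + b| ≤ 2 := (abs_add_le _ _).trans (by linarith)
  exact mul_le_mul h2 h (abs_nonneg _) (by norm_num)

lemma four_diff {a b δ : ℝ} (ha : |a| ≤ 1) (hb : |b| ≤ 1) (h : |a - b| ≤ δ) :
    |a ^ 4 - b ^ 4| ≤ 4 * δ := by
  have h1 := sq_diff ha hb h
  have h2 := sq_diff (a := a ^ 2) (b := b ^ 2) (by rw [abs_pow]; exact pow_le_one₀ (abs_nonneg _) ha)
    (by rw [abs_pow]; exact pow_le_one₀ (abs_nonneg _) hb) h1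
  have : a ^ 4 - b ^ 4 = (a ^ 2) ^ 2 - (b ^ 2) ^ 2 := by ring
  rw [this]; linarith

lemma sq_inv {a b σ : ℝ} (hσ : σ = 1 ∨ σ = -1) (ha : 1 / 2 ≤ σ * a) (hb : 1 / 2 ≤ σ * b) :
    |a - b| ≤ |a ^ 2 - b ^ 2| := by
  have : a ^ 2 - b ^ 2 = (a + b) * (a - b) := by ring
  rw [this, abs_mul]
  have : 1 ≤ |a + b| := by
    rcases hσ with rfl | rfl
    · exact le_trans (by linarith) (le_abs_self _)
    · exact le_trans (by linarith) (neg_le_abs _)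
  nlinarith [abs_nonneg (a - b)]

lemma four_inv {a b σ : ℝ} (hσ : σ = 1 ∨ σ = -1) (ha : 1 / 2 ≤ σ * a) (hb : 1 / 2 ≤ σ * b) :
    |a - b| ≤ 2 * |a ^ 4 - b ^ 4| := by
  have h1 := sq_inv hσ ha hb
  have : a ^ 4 - b ^ 4 = (a ^ 2 + b ^ 2) * (a ^ 2 - b ^ 2) := by ring
  rw [this, abs_mul]
  have : 1 / 2 ≤ |a ^ 2 + b ^ 2| := by
    rw [abs_of_nonneg (by positivity)]
    rcases hσ with rfl | rfl <;> nlinarith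
  nlinarith [abs_nonneg (a ^ 2 - b ^ 2)]

lemma anti {p q : C2} (hp : p ∈ bD) (hq : q ∈ bD) {σ : ℝ} (hσ : σ = 1 ∨ σ = -1) (j : Fin 4)
    (hp' : 1 / 2 ≤ σ * co p j) (hq' : 1 / 2 ≤ σ * co q j) :
    dist p q ≤ 19 * dist (pj j p) (pj j q) := by
  have hp0 : rho p = 0 := hp
  have hq0 : rho q = 0 := hq
  have bp := co_bd hp0.le
  have bq := co_bd hq0.le
  rw [rho_eq] at hp0 hq0
  set δ := dist (pj j p) (pj j q) with hδ
  have hi : ∀ i, |co p (j.succAbove i) - co q (j.succAbove i)| ≤ δ := fun i => by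
    rw [← Real.dist_eq]; exact dist_le_pi_dist (pj j p) (pj j q) i
  refine (dist_le p q).trans ?_
  have e0 := hi 0
  have e1 := hi 1
  have e2 := hi 2
  clear_value δ
  fin_cases j
  · have e0 : |co p 1 - co q 1| ≤ δ := e0
    have e1 : |co p 2 - co q 2| ≤ δ := e1
    have e2 : |co p 3 - co q 3| ≤ δ := e2
    have f := sq_inv hσ hp' hq'
    have g0 := four_diff (bp _) (bq _) e0
    have g1 := sq_diff (bp _) (bq _) e1
    have g2 := sq_diff (bp _) (bq _) e2
    simp only [Fin.zero_eta] at f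
    rw [show co p 0 ^ 2 - co q 0 ^ 2 = -((co p 1 ^ 4 - co q 1 ^ 4) + (co p 2 ^ 2 - co q 2 ^ 2)
      + (co p 3 ^ 2 - co q 3 ^ 2)) by linarith, abs_neg] at f
    have := f.trans (abs_add_three _ _ _)
    linarith [abs_nonneg (co p 1 - co q 1)]
  · have e0 : |co p 0 - co q 0| ≤ δ := e0
    have e1 : |co p 2 - co q 2| ≤ δ := e1
    have e2 : |co p 3 - co q 3| ≤ δ := e2
    have f := four_inv hσ hp' hq'
    have g0 := sq_diff (bp _) (bq _) e0
    have g1 := sq_diff (bp _) (bq _) e1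
    have g2 := sq_diff (bp _) (bq _) e2
    simp only [Fin.mk_one] at f
    rw [show co p 1 ^ 4 - co q 1 ^ 4 = -((co p 0 ^ 2 - co q 0 ^ 2) + (co p 2 ^ 2 - co q 2 ^ 2)
      + (co p 3 ^ 2 - co q 3 ^ 2)) by linarith, abs_neg] at f
    have := abs_add_three (co p 0 ^ 2 - co q 0 ^ 2) (co p 2 ^ 2 - co q 2 ^ 2)
      (co p 3 ^ 2 - co q 3 ^ 2)
    linarith [abs_nonneg (co p 0 - co q 0)]
  · have e0 : |co p 0 - co q 0| ≤ δ := e0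
    have e1 : |co p 1 - co q 1| ≤ δ := e1
    have e2 : |co p 3 - co q 3| ≤ δ := e2
    have f := sq_inv hσ hp' hq'
    have g0 := sq_diff (bp _) (bq _) e0
    have g1 := four_diff (bp _) (bq _) e1
    have g2 := sq_diff (bp _) (bq _) e2
    simp only [Fin.reduceFinMk] at f
    rw [show co p 2 ^ 2 - co q 2 ^ 2 = -((co p 0 ^ 2 - co q 0 ^ 2) + (co p 1 ^ 4 - co q 1 ^ 4)
      + (co p 3 ^ 2 - co q 3 ^ 2)) by linarith, abs_neg] at f
    have := f.trans (abs_add_three _ _ _)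
    linarith [abs_nonneg (co p 1 - co q 1)]
  · have e0 : |co p 0 - co q 0| ≤ δ := e0
    have e1 : |co p 1 - co q 1| ≤ δ := e1
    have e2 : |co p 2 - co q 2| ≤ δ := e2
    have f := sq_inv hσ hp' hq'
    have g0 := sq_diff (bp _) (bq _) e0
    have g1 := four_diff (bp _) (bq _) e1
    have g2 := sq_diff (bp _) (bq _) e2
    simp only [Fin.reduceFinMk] at f
    rw [show co p 3 ^ 2 - co q 3 ^ 2 = -((co p 0 ^ 2 - co q 0 ^ 2) + (co p 1 ^ 4 - co q 1 ^ 4)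
      + (co p 2 ^ 2 - co q 2 ^ 2)) by linarith, abs_neg] at f
    have := f.trans (abs_add_three _ _ _)
    linarith [abs_nonneg (co p 1 - co q 1)]

lemma piece (j : Fin 4) {σ : ℝ} (hσ : σ = 1 ∨ σ = -1) (S : Set C2) (hS : S ⊆ bD)
    (hS' : ∀ w ∈ S, 1 / 2 ≤ σ * co w j) (c a : Fin 4 → ℝ)
    (hSa : ∀ w ∈ S, ∀ i, |co w i - c i| ≤ a i) :
    μH[3] S ≤ ENNReal.ofReal (19 ^ 3) * ∏ i : Fin 3, ENNReal.ofReal (2 * a (j.succAbove i)) := by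
  have hinj : Set.InjOn (pj j) S := fun p hp q hq h => by
    have := anti (hS hp) (hS hq) hσ j (hS' p hp) (hS' q hq)
    rw [h, dist_self, mul_zero] at this
    exact dist_le_zero.1 this
  set g := Function.invFunOn (pj j) S
  have hg : ∀ p ∈ S, g (pj j p) = p := fun p hp => hinj.leftInvOn_invFunOn hp
  have hL : LipschitzOnWith 19 g (pj j '' S) := by
    refine LipschitzOnWith.of_dist_le_mul ?_
    rintro _ ⟨p, hp, rfl⟩ _ ⟨q, hq, rfl⟩
    rw [hg p hp, hg q hq]
    exact anti (hS hp) (hS hq) hσ j (hS' p hp) (hS' q hq)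
  have h1 := hL.hausdorffMeasure_image_le (d := 3) (by norm_num)
  have h2 : S = g '' (pj j '' S) := by
    ext p
    simp only [Set.mem_image, exists_exists_and_eq_and]
    constructor
    · intro hp; exact ⟨p, hp, hg p hp⟩
    · rintro ⟨q, hq, rfl⟩; rw [hg q hq]; exact hq
  rw [← h2] at h1
  refine h1.trans ?_
  have h3 : (μH[3] : Measure (Fin 3 → ℝ)) = volume := by
    have := hausdorffMeasure_pi_real (ι := Fin 3)
    simpa using this
  rw [h3]
  gcongr
  · rw [ENNReal.ofReal_pow (by norm_num)]
    norm_num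
  · calc volume (pj j '' S) ≤ volume (Set.Icc (fun i => c (j.succAbove i) - a (j.succAbove i))
          (fun i : Fin 3 => c (j.succAbove i) + a (j.succAbove i))) := by
          apply measure_mono
          rintro _ ⟨p, hp, rfl⟩
          constructor <;> intro i <;> have := abs_le.1 (hSa p hp (j.succAbove i)) <;>
            simp only [pj] <;> linarith
      _ = _ := by
          rw [Real.volume_Icc_pi]
          congr 1; ext i; congr 1; ring

def AA (ζ : C2) (k : ℕ) : Set C2 := {w | w ∈ bD ∧ qq w ζ ≤ 16 * (1 / 16) ^ k}

lemma co_cont (i : Fin 4) : Continuous (fun w => co w i) := by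
  fin_cases i <;> simp [co] <;> fun_prop

lemma bD_closed : IsClosed bD := by
  have : Continuous rho := by unfold rho; fun_prop
  exact isClosed_eq this continuous_const

lemma AA_meas (ζ : C2) (k : ℕ) : MeasurableSet (AA ζ k) := by
  apply IsClosed.measurableSet
  have h : Continuous (fun w => qq w ζ) := by unfold qq; fun_prop
  exact bD_closed.inter (isClosed_le h continuous_const)

lemma AA_box {ζ : C2} {k : ℕ} {w : C2} (h : w ∈ AA ζ k) (i : Fin 4) :
    |co w i - co ζ i| ≤ ![4 * (1/4) ^ k, 3 * (1/2) ^ k, 4 * (1/4) ^ k, 4 * (1/4) ^ k] i := by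
  have h2 := h.2
  unfold qq at h2
  have e : ((1:ℝ) / 16) ^ k = ((1/4) ^ k) ^ 2 := by rw [← pow_mul, mul_comm, pow_mul]; norm_num
  have e' : ((1:ℝ) / 4) ^ k = ((1/2) ^ k) ^ 2 := by rw [← pow_mul, mul_comm, pow_mul]; norm_num
  have p4 : (0:ℝ) < (1/4) ^ k := by positivity
  have p2 : (0:ℝ) < (1/2) ^ k := by positivity
  have n0 := sq_nonneg ((w 0).re - (ζ 0).re)
  have n1 : 0 ≤ ((w 0).im - (ζ 0).im) ^ 4 := by positivity
  have n2 := sq_nonneg ((w 1).re - (ζ 1).re)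
  have n3 := sq_nonneg ((w 1).im - (ζ 1).im)
  have gen : ∀ x : ℝ, x ^ 2 ≤ 16 * (1 / 16) ^ k → |x| ≤ 4 * (1/4) ^ k := fun x hx => by
    apply abs_le_of_sq_le_sq _ (by positivity)
    rw [e] at hx; nlinarith
  fin_cases i
  · exact gen ((w 0).re - (ζ 0).re) (by linarith)
  · change |(w 0).im - (ζ 0).im| ≤ 3 * (1/2) ^ k
    have : ((w 0).im - (ζ 0).im) ^ 4 ≤ (3 * (1/2) ^ k) ^ 4 := by
      rw [e, e'] at h2
      have : (0:ℝ) < ((1/2) ^ k) ^ 4 := by positivity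
      nlinarith
    have h4 : |(w 0).im - (ζ 0).im| ^ 4 ≤ (3 * (1/2) ^ k) ^ 4 := by
      rwa [(by decide : Even 4).pow_abs]
    exact le_of_pow_le_pow_left₀ (by norm_num) (by positivity) h4
  · exact gen ((w 1).re - (ζ 1).re) (by linarith)
  · exact gen ((w 1).im - (ζ 1).im) (by linarith)

lemma prod_le (j : Fin 4) (k : ℕ) : ∏ i : Fin 3, ENNReal.ofReal
    (2 * (![4 * (1/4) ^ k, 3 * (1/2) ^ k, 4 * (1/4) ^ k, 4 * (1/4) ^ k] : Fin 4 → ℝ) (j.succAbove i))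
    ≤ ENNReal.ofReal (512 * (1/32) ^ k) := by
  have e' : ((1:ℝ) / 4) ^ k = ((1/2) ^ k) ^ 2 := by rw [← pow_mul, mul_comm, pow_mul]; norm_num
  have e32 : ((1:ℝ) / 32) ^ k = ((1/2) ^ k) ^ 5 := by rw [← pow_mul, mul_comm, pow_mul]; norm_num
  have p2 : (0:ℝ) < (1/2) ^ k := by positivity
  have p1 : ((1:ℝ)/2) ^ k ≤ 1 := pow_le_one₀ (by norm_num) (by norm_num)
  rw [e', e32]
  generalize ((1:ℝ)/2) ^ k = x at *
  have p5 : 0 < x ^ 5 := by positivity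
  have p6 : x ^ 6 ≤ x ^ 5 := pow_le_pow_of_le_one p2.le p1 (by norm_num)
  rw [← ENNReal.ofReal_prod_of_nonneg]
  · apply ENNReal.ofReal_le_ofReal
    rw [Fin.prod_univ_three]
    fin_cases j
    · change 2 * (3 * x) * (2 * (4 * x ^ 2)) * (2 * (4 * x ^ 2)) ≤ _
      nlinarith
    · change 2 * (4 * x ^ 2) * (2 * (4 * x ^ 2)) * (2 * (4 * x ^ 2)) ≤ _
      nlinarith
    · change 2 * (4 * x ^ 2) * (2 * (3 * x)) * (2 * (4 * x ^ 2)) ≤ _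
      nlinarith
    · change 2 * (4 * x ^ 2) * (2 * (3 * x)) * (2 * (4 * x ^ 2)) ≤ _
      nlinarith
  · intro i _
    generalize j.succAbove i = m
    fin_cases m <;> simp <;> positivity

lemma cover {w : C2} (hw : w ∈ bD) : ∃ j : Fin 4, ∃ b : Bool,
    1 / 2 ≤ (if b then (1:ℝ) else -1) * co w j := by
  have h0 : rho w = 0 := hw
  rw [rho_eq] at h0
  have : ∃ j, 1 / 2 ≤ |co w j| := by
    by_contra hc
    push Not at hc
    have s : ∀ j, co w j ^ 2 < 1 / 4 := fun j => by
      rw [← sq_abs]; nlinarith [hc j, abs_nonneg (co w j)]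
    have := s 1
    have : co w 1 ^ 4 < 1 / 4 := by nlinarith [sq_nonneg (co w 1)]
    linarith [s 0, s 2, s 3]
  obtain ⟨j, hj⟩ := this
  rcases le_abs.1 hj with h | h
  · exact ⟨j, true, by simpa using h⟩
  · exact ⟨j, false, by simpa using h⟩

lemma AA_le (ζ : C2) (k : ℕ) :
    μH[3] (AA ζ k) ≤ ENNReal.ofReal (8 * 19 ^ 3 * 512 * (1/32) ^ k) := by
  have hsub : AA ζ k ⊆ ⋃ jb : Fin 4 × Bool,
      {w | w ∈ AA ζ k ∧ 1 / 2 ≤ (if jb.2 then (1:ℝ) else -1) * co w jb.1} := by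
    intro w hw
    obtain ⟨j, b, h⟩ := cover hw.1
    exact Set.mem_iUnion.2 ⟨(j, b), hw, h⟩
  refine (measure_mono hsub).trans ((measure_iUnion_fintype_le _ _).trans ?_)
  have : ∀ jb : Fin 4 × Bool, μH[3] {w | w ∈ AA ζ k ∧
      1 / 2 ≤ (if jb.2 then (1:ℝ) else -1) * co w jb.1}
      ≤ ENNReal.ofReal (19 ^ 3) * ENNReal.ofReal (512 * (1/32) ^ k) := fun jb => by
    refine (piece jb.1 (σ := if jb.2 then (1:ℝ) else -1) ?_ _ (fun w hw => hw.1.1)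
      (fun w hw => hw.2) (co ζ) _ (fun w hw i => AA_box hw.1 i)).trans ?_
    · cases jb.2 <;> simp
    · gcongr; exact prod_le _ _
  refine (Finset.sum_le_sum fun jb _ => this jb).trans ?_
  rw [Finset.sum_const, ← ENNReal.ofReal_mul (by positivity), nsmul_eq_mul]
  simp only [Finset.card_univ, Fintype.card_prod, Fintype.card_fin, Fintype.card_bool]
  rw [show (((4 * 2 : ℕ)) : ℝ≥0∞) = ENNReal.ofReal 8 by norm_num,
    ← ENNReal.ofReal_mul (by positivity)]
  apply le_of_eq; congr 1; ring

def JJ (s : ℝ) (ζ w : C2) : ℝ≥0∞ :=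
  ∑' k : ℕ, (AA ζ k).indicator (fun _ => ENNReal.ofReal (((16:ℝ) ^ s) ^ k)) w

lemma JJ_int (s : ℝ) (hs : s < 5 / 4) (ζ : C2) :
    ∫⁻ w, JJ s ζ w ∂μH[3] ≤
      ENNReal.ofReal (8 * 19 ^ 3 * 512 * (1 - (16:ℝ) ^ s / 32)⁻¹) := by
  unfold JJ
  rw [lintegral_tsum (fun k => (measurable_const.indicator (AA_meas ζ k)).aemeasurable)]
  have h16 : (16:ℝ) ^ s < 32 := by
    calc (16:ℝ) ^ s < 16 ^ (5/4 : ℝ) := Real.rpow_lt_rpow_of_exponent_lt (by norm_num) hs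
      _ = 32 := by
        rw [show (16:ℝ) = 2 ^ (4:ℝ) by norm_num, ← Real.rpow_mul (by norm_num)]; norm_num
  have p : (0:ℝ) < 16 ^ s := by positivity
  have hr : (16:ℝ) ^ s / 32 < 1 := by rw [div_lt_one (by norm_num)]; exact h16
  have hle : ∀ k : ℕ, ∫⁻ w, (AA ζ k).indicator (fun _ => ENNReal.ofReal (((16:ℝ) ^ s) ^ k)) w ∂μH[3]
      ≤ ENNReal.ofReal (8 * 19 ^ 3 * 512 * ((16:ℝ) ^ s / 32) ^ k) := fun k => by
    rw [lintegral_indicator_const (AA_meas ζ k)]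
    refine (mul_le_mul_right (AA_le ζ k) _).trans ?_
    rw [← ENNReal.ofReal_mul (by positivity)]
    apply le_of_eq; congr 1
    rw [div_pow, div_pow, one_pow]; ring
  refine (ENNReal.tsum_le_tsum hle).trans ?_
  rw [← ENNReal.ofReal_tsum_of_nonneg (fun k => by positivity)
    ((summable_geometric_of_lt_one (by positivity) hr).mul_left _), tsum_mul_left,
    tsum_geometric_of_lt_one (by positivity) hr]

lemma qq_nonneg (w ζ : C2) : 0 ≤ qq w ζ := by unfold qq; positivity

lemma qq_le {w ζ : C2} (hw : rho w ≤ 0) (hζ : rho ζ ≤ 0) : qq w ζ ≤ 16 := by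
  have a := fun i => abs_le.1 (co_bd hw i)
  have b := fun i => abs_le.1 (co_bd hζ i)
  have sq : ∀ i, (co w i - co ζ i) ^ 2 ≤ 4 := fun i => by
    have := a i; have := b i
    have : |co w i - co ζ i| ≤ 2 := abs_le.2 ⟨by linarith, by linarith⟩
    rw [← sq_abs]; nlinarith [abs_nonneg (co w i - co ζ i)]
  have : (co w 1 - co ζ 1) ^ 4 ≤ 16 := by nlinarith [sq 1, sq_nonneg (co w 1 - co ζ 1)]
  have key : qq w ζ = (co w 0 - co ζ 0) ^ 2 + (co w 1 - co ζ 1) ^ 4 / 3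
    + (co w 2 - co ζ 2) ^ 2 + (co w 3 - co ζ 3) ^ 2 := rfl
  -- the second complex coordinate has norm at most one
  have r1 := rho_eq w
  have r2 := rho_eq ζ
  have : (co w 2 - co ζ 2) ^ 2 + (co w 3 - co ζ 3) ^ 2 ≤ 4 := by
    nlinarith [sq_nonneg (co w 2 + co ζ 2), sq_nonneg (co w 3 + co ζ 3), sq_nonneg (co w 0),
      sq_nonneg (co ζ 0), sq_nonneg (co w 1 ^ 2), sq_nonneg (co ζ 1 ^ 2)]
  linarith [sq 0]

lemma JJ_top {s : ℝ} (hs : 0 ≤ s) {w ζ : C2} (hw : w ∈ bD) (h : qq w ζ = 0) : JJ s ζ w = ⊤ := by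
  unfold JJ
  have h1 : ∀ k : ℕ, (1:ℝ≥0∞) ≤
      (AA ζ k).indicator (fun _ => ENNReal.ofReal (((16:ℝ) ^ s) ^ k)) w := fun k => by
    have hm : w ∈ AA ζ k := ⟨hw, by rw [h]; positivity⟩
    rw [Set.indicator_of_mem hm]
    rw [ENNReal.one_le_ofReal]
    exact one_le_pow₀ (Real.one_le_rpow (by norm_num) hs)
  rw [eq_top_iff, ← ENNReal.tsum_const_eq_top_of_ne_zero (α := ℕ) (one_ne_zero)]
  exact ENNReal.tsum_le_tsum h1

lemma JJ_ge {s : ℝ} (hs : 0 ≤ s) {w ζ : C2} (hw : w ∈ bD) (hζ : rho ζ ≤ 0) (h : 0 < qq w ζ) :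
    ENNReal.ofReal ((qq w ζ) ^ (-s)) ≤ JJ s ζ w := by
  have hw0 : rho w = 0 := hw
  have h16 := qq_le hw0.le hζ
  obtain ⟨k, hk1, hk2⟩ := exists_nat_pow_near_of_lt_one (x := qq w ζ / 16) (y := (1/16 : ℝ))
    (by positivity) (by linarith) (by norm_num) (by norm_num)
  unfold JJ
  refine le_trans ?_ (ENNReal.le_tsum k)
  have hm : w ∈ AA ζ k := ⟨hw, by linarith⟩
  rw [Set.indicator_of_mem hm]
  apply ENNReal.ofReal_le_ofReal
  have : (1/16 : ℝ) ^ k ≤ qq w ζ := by rw [pow_succ] at hk1; linarith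
  calc qq w ζ ^ (-s) ≤ ((1/16 : ℝ) ^ k) ^ (-s) :=
        Real.rpow_le_rpow_of_nonpos (by positivity) this (by linarith)
    _ = _ := by
      rw [one_div, inv_pow, Real.inv_rpow (by positivity), ← Real.rpow_neg (by positivity), neg_neg,
        ← Real.rpow_natCast, ← Real.rpow_mul (by norm_num), ← Real.rpow_natCast,
        ← Real.rpow_mul (by norm_num), mul_comm]

lemma Delta_ge {w ζ : C2} (hw : w ∈ bD) (hζ : rho ζ ≤ 0) : qq w ζ / 2 ≤ ‖Delta w ζ‖ := by
  have hw0 : rho w = 0 := hw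
  rw [rho_eq] at hw0 hζ
  refine le_trans ?_ (Complex.re_le_norm _)
  have e : (Delta w ζ).re = (w 0).re * ((w 0).re - (ζ 0).re)
      + 2 * (w 0).im ^ 3 * ((w 0).im - (ζ 0).im)
      + (w 1).re * ((w 1).re - (ζ 1).re) + (w 1).im * ((w 1).im - (ζ 1).im) := by
    have : ((w 0).im : ℂ) ^ 3 = (((w 0).im ^ 3 : ℝ) : ℂ) := by push_cast; rfl
    simp [-Complex.ofReal_pow, Delta, this]
    ring
  rw [e]
  simp only [co, Matrix.cons_val] at hw0 hζ
  unfold qq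
  generalize (w 0).re = u at *
  generalize (w 0).im = v at *
  generalize (w 1).re = a at *
  generalize (w 1).im = b at *
  generalize (ζ 0).re = x at *
  generalize (ζ 0).im = y at *
  generalize (ζ 1).re = c at *
  generalize (ζ 1).im = d at *
  have : 0 ≤ (y - v) ^ 2 * ((y + v) ^ 2 + 2 * v ^ 2 - (y - v) ^ 2 / 3) := by
    apply mul_nonneg (sq_nonneg _)
    have : (y + v) ^ 2 + 2 * v ^ 2 - (y - v) ^ 2 / 3 = (2/3) * (y + 2 * v) ^ 2 := by ring
    rw [this]; positivity
  nlinarith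

lemma grad0 (z : C2) : gradRho z 0 = (2 * (z 0).re : ℝ) + (4 * (z 0).im ^ 3 : ℝ) * I := by
  simp [gradRho]

lemma grad1 (z : C2) : gradRho z 1 = 2 * z 1 := by
  simp [gradRho]

lemma grad_norm {z : C2} (hz : z ∈ bD) : 1 ≤ ‖gradRho z‖ := by
  have hz0 : rho z = 0 := hz
  have hb := co_bd hz0.le 1
  rw [rho_eq] at hz0
  rw [EuclideanSpace.norm_eq, Fin.sum_univ_two, Real.one_le_sqrt, grad0, grad1, Complex.sq_norm,
    Complex.sq_norm, Complex.normSq_apply, Complex.normSq_apply]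
  have : ((z 0).im : ℂ) ^ 3 = (((z 0).im ^ 3 : ℝ) : ℂ) := by push_cast; rfl
  simp [-Complex.ofReal_pow, this]
  simp only [co, Matrix.cons_val] at hz0 hb
  generalize (z 0).re = u at *
  generalize (z 0).im = v at *
  generalize (z 1).re = a at *
  generalize (z 1).im = b at *
  have h2 : 0 ≤ 16 * (v ^ 2) ^ 3 - 4 * (v ^ 2) ^ 2 + 3 := by
    have : 0 ≤ v ^ 2 := sq_nonneg v
    have : v ^ 2 ≤ 1 := (sq_le_one_iff_abs_le_one v).2 hb
    generalize v ^ 2 = t at *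
    nlinarith [mul_nonneg ‹0 ≤ t› (sq_nonneg (t - 1/2)), sq_nonneg (t - 1/6)]
  nlinarith

lemma rho_in {z : C2} (hz : z ∈ bD) {ε : ℝ} (h0 : 0 < ε) (h1 : ε < 1 / 4) :
    rho (z + ε • Nvec z) ≤ 0 := by
  have hz0 : rho z = 0 := hz
  have hb := co_bd hz0.le 1
  have hg := grad_norm hz
  obtain ⟨t, ht⟩ : ∃ t, t = ε * ‖gradRho z‖⁻¹ := ⟨_, rfl⟩
  have ht0 : 0 ≤ t := by rw [ht]; positivity
  have ht1 : t ≤ 1 / 4 := by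
    rw [ht]; have : ‖gradRho z‖⁻¹ ≤ 1 := inv_le_one_of_one_le₀ hg
    nlinarith
  have e : z + ε • Nvec z = z + (-t) • gradRho z := by
    rw [Nvec, smul_smul, ht]; congr 2; ring
  rw [e, rho_eq]
  rw [rho_eq] at hz0
  have : ((z 0).im : ℂ) ^ 3 = (((z 0).im ^ 3 : ℝ) : ℂ) := by push_cast; rfl
  simp only [co, Matrix.cons_val] at hz0 hb ⊢
  simp [-Complex.ofReal_pow, grad0, grad1, this]
  generalize (z 0).re = u at *
  generalize (z 0).im = v at *
  generalize (z 1).re = a at *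
  generalize (z 1).im = b at *
  have hv : v ^ 2 ≤ 1 := (sq_le_one_iff_abs_le_one v).2 hb
  have hv0 : 0 ≤ v ^ 2 := sq_nonneg v
  have m2 : (1 - 2 * t) ^ 2 ≤ 1 := by nlinarith
  have k0 : 0 ≤ t * v ^ 2 := by positivity
  have k1 : t * v ^ 2 ≤ 1 / 4 := by nlinarith
  have m4 : (1 - 4 * (t * v ^ 2)) ^ 4 ≤ 1 := pow_le_one₀ (by linarith) (by linarith)
  have q0 : ∀ x : ℝ, (x + -(t * (2 * x))) ^ 2 ≤ x ^ 2 := fun x => by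
    have : (x + -(t * (2 * x))) ^ 2 = (1 - 2 * t) ^ 2 * x ^ 2 := by ring
    rw [this]; nlinarith [sq_nonneg x]
  have q1 : (v + -(t * (4 * v ^ 3))) ^ 4 ≤ v ^ 4 := by
    have : (v + -(t * (4 * v ^ 3))) ^ 4 = (1 - 4 * (t * v ^ 2)) ^ 4 * v ^ 4 := by ring
    rw [this]; nlinarith [sq_nonneg (v ^ 2)]
  linarith [q0 u, q0 a, q0 b]

lemma Delta_diff {w z : C2} (hw : w ∈ bD) {ε : ℝ} (h0 : 0 < ε) :
    ‖Delta w (z + ε • Nvec z) - Delta w z‖ ≤ 4 * ε := by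
  have hw0 : rho w = 0 := hw
  have hb := co_bd hw0.le
  have hn : ‖Nvec z‖ ≤ 1 := by
    rw [Nvec, norm_smul, norm_neg, norm_inv, norm_norm]
    exact inv_mul_le_one
  have e : Delta w (z + ε • Nvec z) - Delta w z =
      -(ε * ((((w 0).re : ℂ) - 2 * I * ((w 0).im : ℂ) ^ 3) * Nvec z 0
        + (starRingEnd ℂ) (w 1) * Nvec z 1)) := by
    simp [Delta]; ring
  rw [e, norm_neg, norm_mul, Complex.norm_real, Real.norm_of_nonneg h0.le, mul_comm]
  gcongr
  have n0 : ‖Nvec z 0‖ ≤ 1 := (PiLp.norm_apply_le _ _).trans hn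
  have n1 : ‖Nvec z 1‖ ≤ 1 := (PiLp.norm_apply_le _ _).trans hn
  have c1 : ‖((w 0).re : ℂ) - 2 * I * ((w 0).im : ℂ) ^ 3‖ ≤ 3 := by
    refine (norm_sub_le _ _).trans ?_
    have b0 : |(w 0).re| ≤ 1 := hb 0
    have b1 : |(w 0).im| ^ 3 ≤ 1 := pow_le_one₀ (abs_nonneg _) (hb 1)
    simp
    linarith
  have c2 : ‖(starRingEnd ℂ) (w 1)‖ ≤ 1 := by
    rw [RCLike.norm_conj]
    rw [rho] at hw0
    have : ‖w 1‖ ^ 2 ≤ 1 := by nlinarith [sq_nonneg (w 0).re, sq_nonneg ((w 0).im ^ 2)]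
    nlinarith [norm_nonneg (w 1)]
  refine (norm_add_le _ _).trans ?_
  rw [norm_mul, norm_mul]
  have := mul_le_mul c1 n0 (norm_nonneg _) (by norm_num)
  have := mul_le_mul c2 n1 (norm_nonneg _) (by norm_num)
  linarith

lemma interp_aux {β A B d e : ℝ} (hβ0 : 0 < β) (hβ : β < 1) (hA : 0 < A) (hAB : A ≤ B)
    (hd0 : 0 ≤ d) (hd : d ≤ A + B) (hde : d ≤ e) : d / (A * B) ≤ 2 * e ^ β * A ^ (-(1 + β)) := by
  have hB : 0 < B := hA.trans_le hAB
  rcases hd0.eq_or_lt with rfl | hd0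
  · rw [zero_div]; positivity
  have h1 : d ≤ e ^ β * (2 * B ^ (1 - β)) := by
    calc d = d ^ β * d ^ (1 - β) := by rw [← Real.rpow_add hd0]; simp
      _ ≤ e ^ β * (2 * B) ^ (1 - β) := by
        have : 0 < e := hd0.trans_le hde
        have : d ≤ 2 * B := by linarith
        have : 0 ≤ 1 - β := by linarith
        gcongr
      _ = e ^ β * (2 ^ (1 - β) * B ^ (1 - β)) := by rw [Real.mul_rpow (by norm_num) hB.le]
      _ ≤ e ^ β * (2 * B ^ (1 - β)) := by
        have : 0 < e := hd0.trans_le hde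
        refine mul_le_mul_of_nonneg_left (mul_le_mul_of_nonneg_right ?_ (by positivity)) (by positivity)
        calc (2:ℝ) ^ (1 - β) ≤ 2 ^ (1:ℝ) := Real.rpow_le_rpow_of_exponent_le (by norm_num) (by linarith)
          _ = 2 := by norm_num
  have h2 : B ^ (1 - β) = B * B ^ (-β) := by
    rw [sub_eq_add_neg, Real.rpow_add hB, Real.rpow_one]
  have h3 : B ^ (-β) ≤ A ^ (-β) := Real.rpow_le_rpow_of_nonpos hA hAB (by linarith)
  have h4 : A ^ (-(1 + β)) = A⁻¹ * A ^ (-β) := by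
    rw [neg_add, Real.rpow_add hA, Real.rpow_neg_one]
  have he : 0 ≤ e ^ β := by have := hd0.trans_le hde; positivity
  rw [div_le_iff₀ (by positivity), h4]
  calc d ≤ e ^ β * (2 * (B * B ^ (-β))) := by rw [← h2]; exact h1
    _ ≤ e ^ β * (2 * (B * A ^ (-β))) := by gcongr
    _ = _ := by field_simp

lemma interp {β ε : ℝ} (hβ0 : 0 < β) (hβ : β < 1) (hε : 0 < ε) {a b : ℂ} (ha : a ≠ 0) (hb : b ≠ 0)
    (hd : ‖a - b‖ ≤ 4 * ε) :
    ‖a⁻¹ - b⁻¹‖ ≤ 8 * ε ^ β * (‖a‖ ^ (-(1 + β)) + ‖b‖ ^ (-(1 + β))) := by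
  have hA := norm_pos_iff.2 ha
  have hB := norm_pos_iff.2 hb
  have e : ‖a⁻¹ - b⁻¹‖ = ‖a - b‖ / (‖a‖ * ‖b‖) := by
    rw [inv_sub_inv ha hb, norm_div, norm_mul, norm_sub_rev]
  have h4 : (4 * ε) ^ β ≤ 4 * ε ^ β := by
    rw [Real.mul_rpow (by norm_num) hε.le]
    gcongr
    calc (4:ℝ) ^ β ≤ 4 ^ (1:ℝ) := Real.rpow_le_rpow_of_exponent_le (by norm_num) (by linarith)
      _ = 4 := by norm_num
  have pa : 0 < ‖a‖ ^ (-(1 + β)) := by positivity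
  have pb : 0 < ‖b‖ ^ (-(1 + β)) := by positivity
  have pe : 0 < ε ^ β := by positivity
  rw [e]
  rcases le_total ‖a‖ ‖b‖ with h | h
  · have := interp_aux hβ0 hβ hA h (norm_nonneg _) (norm_sub_le a b) hd
    calc _ ≤ _ := this
      _ ≤ 2 * (4 * ε ^ β) * ‖a‖ ^ (-(1 + β)) := by gcongr
      _ ≤ _ := by nlinarith [mul_pos pe pb]
  · have := interp_aux hβ0 hβ hB h (norm_nonneg _) ((norm_sub_le a b).trans (by linarith)) hd
    rw [mul_comm ‖a‖]
    calc _ ≤ _ := this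
      _ ≤ 2 * (4 * ε ^ β) * ‖b‖ ^ (-(1 + β)) := by gcongr
      _ ≤ _ := by nlinarith [mul_pos pe pa]

lemma half_pow {s q A : ℝ} (hs0 : 0 ≤ s) (hs : s ≤ 2) (hq : 0 < q) (h : q / 2 ≤ A) :
    A ^ (-s) ≤ 4 * q ^ (-s) := by
  calc A ^ (-s) ≤ (q / 2) ^ (-s) := Real.rpow_le_rpow_of_nonpos (by positivity) h (by linarith)
    _ = 2 ^ s * q ^ (-s) := by
      rw [Real.div_rpow hq.le (by norm_num), Real.rpow_neg (by norm_num : (0:ℝ) ≤ 2), div_inv_eq_mul,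
        mul_comm]
    _ ≤ 4 * q ^ (-s) := by
      gcongr
      calc (2:ℝ) ^ s ≤ 2 ^ (2:ℝ) := Real.rpow_le_rpow_of_exponent_le (by norm_num) hs
        _ = 4 := by norm_num

end Stmt7Aux

open Stmt7Aux in
/-- For every `0 < β < 1/4` there are `C < ∞` and `ε₀ > 0` such that for every `z ∈ bD` and
`0 < ε < ε₀`: `∫_{bD} |Δ(w, z+εN(z))⁻¹ − Δ(w,z)⁻¹| dH³(w) ≤ C·ε^β`
(the integrand is interpreted as `+∞` where `Δ` vanishes, e.g. at `w = z`). -/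
theorem stmt7 (β : ℝ) (hβ0 : 0 < β) (hβ : β < 1 / 4) :
    ∃ C ε₀ : ℝ, 0 < ε₀ ∧ ∀ z ∈ bD, ∀ ε : ℝ, 0 < ε → ε < ε₀ →
      ∫⁻ w in bD,
          (if Delta w z = 0 ∨ Delta w (z + ε • Nvec z) = 0 then (⊤ : ℝ≥0∞)
            else ENNReal.ofReal ‖(Delta w (z + ε • Nvec z))⁻¹ - (Delta w z)⁻¹‖) ∂μH[3]
        ≤ ENNReal.ofReal (C * ε ^ β) := by
  obtain ⟨M, hM⟩ : ∃ M : ℝ, M = 8 * 19 ^ 3 * 512 * (1 - (16:ℝ) ^ (1 + β) / 32)⁻¹ := ⟨_, rfl⟩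
  refine ⟨32 * (max M 0 + max M 0), 1 / 4, by norm_num, fun z hz ε h0 h1 => ?_⟩
  have hz0 : rho z = 0 := hz
  have hin := rho_in hz h0 h1
  have pe : 0 < ε ^ β := by positivity
  have hpt : ∀ w ∈ bD, (if Delta w z = 0 ∨ Delta w (z + ε • Nvec z) = 0 then (⊤ : ℝ≥0∞)
            else ENNReal.ofReal ‖(Delta w (z + ε • Nvec z))⁻¹ - (Delta w z)⁻¹‖)
      ≤ ENNReal.ofReal (32 * ε ^ β) *
        (JJ (1 + β) (z + ε • Nvec z) w + JJ (1 + β) z w) := by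
    intro w hw
    have hd := Delta_diff (z := z) hw h0
    generalize z + ε • Nvec z = ζ at *
    have hc : ENNReal.ofReal (32 * ε ^ β) ≠ 0 := by
      rw [Ne, ENNReal.ofReal_eq_zero]; push Not; positivity
    rcases (qq_nonneg w z).eq_or_lt with h | hq
    · rw [JJ_top (ζ := z) (by linarith) hw h.symm, add_top, ENNReal.mul_top hc]; exact le_top
    rcases (qq_nonneg w ζ).eq_or_lt with h | hq'
    · rw [JJ_top (ζ := ζ) (by linarith) hw h.symm, top_add, ENNReal.mul_top hc]; exact le_top
    have d1 := Delta_ge hw hz0.le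
    have d2 := Delta_ge hw hin
    have n1 : Delta w z ≠ 0 := norm_pos_iff.1 (by linarith)
    have n2 : Delta w ζ ≠ 0 := norm_pos_iff.1 (by linarith)
    rw [if_neg (by tauto)]
    calc _ ≤ ENNReal.ofReal (32 * ε ^ β * (qq w ζ ^ (-(1 + β)) + qq w z ^ (-(1 + β)))) := by
          apply ENNReal.ofReal_le_ofReal
          refine (interp hβ0 (by linarith) h0 n2 n1 hd).trans ?_
          have a1 := half_pow (s := 1 + β) (by linarith) (by linarith) hq d1
          have a2 := half_pow (s := 1 + β) (by linarith) (by linarith) hq' d2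
          calc _ ≤ 8 * ε ^ β * (4 * qq w ζ ^ (-(1 + β)) + 4 * qq w z ^ (-(1 + β))) := by gcongr
            _ = _ := by ring
      _ = ENNReal.ofReal (32 * ε ^ β) * (ENNReal.ofReal (qq w ζ ^ (-(1 + β)))
            + ENNReal.ofReal (qq w z ^ (-(1 + β)))) := by
          rw [ENNReal.ofReal_mul (by positivity), ENNReal.ofReal_add (by positivity) (by positivity)]
      _ ≤ _ := by
          gcongr
          · exact JJ_ge (by linarith) hw hin hq'
          · exact JJ_ge (by linarith) hw hz0.le hq
  have hmeas : ∀ ζ, Measurable (JJ (1 + β) ζ) := fun ζ =>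
    Measurable.tsum (fun k => measurable_const.indicator (AA_meas ζ k))
  have hJ : ∀ ζ, ∫⁻ w in bD, JJ (1 + β) ζ w ∂μH[3] ≤ ENNReal.ofReal (max M 0) := fun ζ =>
    (setLIntegral_le_lintegral _ _).trans ((JJ_int (1 + β) (by linarith) ζ).trans
      (ENNReal.ofReal_le_ofReal (by rw [← hM]; exact le_max_left _ _)))
  refine (setLIntegral_mono' bD_closed.measurableSet hpt).trans ?_
  rw [lintegral_const_mul' _ _ ENNReal.ofReal_ne_top, lintegral_add_left (hmeas _)]
  refine (mul_le_mul_right (add_le_add (hJ _) (hJ _)) _).trans ?_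
  have : 0 ≤ max M 0 := le_max_right _ _
  rw [← ENNReal.ofReal_add this this, ← ENNReal.ofReal_mul (by positivity)]
  apply ENNReal.ofReal_le_ofReal
  apply le_of_eq; ring

end
end

section
/- For every β with 0 ≤ β < 1/4 there is a constant C < ∞ such that for every y₁ ∈ ℝ: ∫∫∫_{B} ( u₁² + u₂² + v₁²·(v₁−y₁)² )^{−(1+β)} du₁ dv₁ du₂ ≤ C, where B = {(u₁,v₁,u₂) ∈ ℝ³ : u₁² + v₁² + u₂² < 1} is the unit ball. -/
open MeasureTheory
open scoped ENNReal

lemma aux_meas (a c : ℝ) : Measurable (fun x : ℝ => (ENNReal.ofReal |x - c|) ^ a) := by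
  fun_prop

lemma aux_pt (M : ℝ≥0∞) (x a : ℝ) (k : ℕ) (ha : 0 ≤ a) (h : ENNReal.ofReal (|x| ^ k) ≤ M) :
    M ^ (-a) ≤ (ENNReal.ofReal |x|) ^ (-(k * a)) := by
  rw [ENNReal.rpow_neg, ENNReal.rpow_neg, ENNReal.inv_le_inv, ENNReal.rpow_mul,
    ENNReal.rpow_natCast, ← ENNReal.ofReal_pow (abs_nonneg x)]
  exact ENNReal.rpow_le_rpow h ha

lemma aux_fin (a : ℝ) (ha : a < 1) :
    ∫⁻ x in Set.Ioo (-1 : ℝ) 1, (ENNReal.ofReal |x|) ^ (-a) < ⊤ := by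
  have h1 : ∫⁻ x in Set.Ioc (0 : ℝ) 1, (ENNReal.ofReal |x|) ^ (-a) < ⊤ := by
    have := (intervalIntegral.intervalIntegrable_rpow' (a := 0) (b := 1) (r := -a) (by linarith)).1
    have h2 := this.lintegral_lt_top
    refine lt_of_le_of_lt (le_of_eq ?_) h2
    refine setLIntegral_congr_fun measurableSet_Ioc ?_
    intro x hx
    simp only
    rw [abs_of_pos hx.1, ENNReal.ofReal_rpow_of_pos hx.1]
  have h3 : ∫⁻ x in Set.Ico (-1 : ℝ) 0, (ENNReal.ofReal |x|) ^ (-a) < ⊤ := by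
    refine lt_of_le_of_lt (le_of_eq ?_) h1
    have := (Measure.measurePreserving_neg (volume : Measure ℝ)).setLIntegral_comp_preimage
      (s := Set.Ioc (0:ℝ) 1) measurableSet_Ioc (f := fun x => (ENNReal.ofReal |x|) ^ (-a))
      (by fun_prop)
    rw [← this]
    simp
  have hs : Set.Ioo (-1 : ℝ) 1 ≤ᵐ[volume] (Set.Ico (-1 : ℝ) 0 ∪ Set.Ioc (0:ℝ) 1 : Set ℝ) := by
    have : ∀ᵐ x : ℝ, x ≠ 0 := by simp [ae_iff]
    filter_upwards [this] with x hx hx2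
    rcases lt_or_gt_of_ne hx with h | h
    · exact Or.inl ⟨hx2.1.le, h⟩
    · exact Or.inr ⟨h, hx2.2.le⟩
  calc _ ≤ ∫⁻ x in (Set.Ico (-1 : ℝ) 0 ∪ Set.Ioc (0:ℝ) 1 : Set ℝ), (ENNReal.ofReal |x|) ^ (-a) :=
        lintegral_mono' (Measure.restrict_mono' hs le_rfl) le_rfl
    _ ≤ _ := lintegral_union_le _ _ _
    _ < ⊤ := ENNReal.add_lt_top.2 ⟨h3, h1⟩

lemma aux_shift (a y : ℝ) (ha : 0 < a) :
    ∫⁻ x in Set.Ioo (-1 : ℝ) 1, (ENNReal.ofReal |x - y|) ^ (-a) ≤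
      2 + ∫⁻ x in Set.Ioo (-1 : ℝ) 1, (ENNReal.ofReal |x|) ^ (-a) := by
  set g : ℝ → ℝ≥0∞ := (Set.Ioo (-1 : ℝ) 1).indicator (fun x => (ENNReal.ofReal |x|) ^ (-a))
  have hp : ∀ x : ℝ, (ENNReal.ofReal |x - y|) ^ (-a) ≤ 1 + g (x - y) := by
    intro x
    by_cases hx : x - y ∈ Set.Ioo (-1 : ℝ) 1
    · simp only [g, Set.indicator_of_mem hx]
      exact le_add_self
    · refine le_trans ?_ le_self_add
      rw [ENNReal.rpow_neg, ENNReal.inv_le_one]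
      refine ENNReal.one_le_rpow ?_ ha |>.trans le_rfl
      rw [Set.mem_Ioo, ← abs_lt, not_lt] at hx
      simpa using hx
  calc _ ≤ ∫⁻ x in Set.Ioo (-1 : ℝ) 1, (1 + g (x - y)) := lintegral_mono hp
    _ = 2 + ∫⁻ x in Set.Ioo (-1 : ℝ) 1, g (x - y) := by
        rw [lintegral_add_left measurable_const]
        simp
        norm_num
    _ ≤ 2 + ∫⁻ x, g (x - y) := by exact add_le_add le_rfl (setLIntegral_le_lintegral _ _)
    _ = _ := by
        rw [lintegral_sub_right_eq_self g y, lintegral_indicator measurableSet_Ioo]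

lemma aux_main (β s t u w v y : ℝ) (hs : 0 ≤ s) (ht : 0 ≤ t) (hst : s + s + t = 2 * (1 + β)) :
    (ENNReal.ofReal (u ^ 2 + w ^ 2 + v ^ 2 * (v - y) ^ 2)) ^ (-(1 + β)) ≤
      (ENNReal.ofReal |u|) ^ (-s) * (((ENNReal.ofReal |v|) ^ (-(2 * t)) +
        (ENNReal.ofReal |v - y|) ^ (-(2 * t))) * (ENNReal.ofReal |w|) ^ (-s)) := by
  set M := ENNReal.ofReal (u ^ 2 + w ^ 2 + v ^ 2 * (v - y) ^ 2) with hM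
  have h1 : M ^ (-(s / 2)) ≤ (ENNReal.ofReal |u|) ^ (-s) := by
    have := aux_pt M u (s / 2) 2 (by linarith) (by
      apply ENNReal.ofReal_le_ofReal; rw [sq_abs]; nlinarith [sq_nonneg u, sq_nonneg w, mul_nonneg (sq_nonneg v) (sq_nonneg (v - y))])
    convert this using 2; push_cast; ring
  have h2 : M ^ (-(s / 2)) ≤ (ENNReal.ofReal |w|) ^ (-s) := by
    have := aux_pt M w (s / 2) 2 (by linarith) (by
      apply ENNReal.ofReal_le_ofReal; rw [sq_abs]; nlinarith [sq_nonneg u, sq_nonneg w, mul_nonneg (sq_nonneg v) (sq_nonneg (v - y))])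
    convert this using 2; push_cast; ring
  have h3 : M ^ (-(t / 2)) ≤ (ENNReal.ofReal |v|) ^ (-(2 * t)) +
        (ENNReal.ofReal |v - y|) ^ (-(2 * t)) := by
    rcases le_total |v| |v - y| with h | h
    · refine le_trans ?_ le_self_add
      have := aux_pt M v (t / 2) 4 (by linarith) (by
        apply ENNReal.ofReal_le_ofReal
        have h' := sq_le_sq.2 h
        have : |v| ^ 4 = v ^ 2 * v ^ 2 := by rw [← sq_abs v]; ring
        nlinarith [sq_nonneg u, sq_nonneg w, mul_le_mul_of_nonneg_left h' (sq_nonneg v)])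
      rwa [show ((4 : ℕ) : ℝ) * (t / 2) = 2 * t by push_cast; ring] at this
    · refine le_trans ?_ le_add_self
      have := aux_pt M (v - y) (t / 2) 4 (by linarith) (by
        apply ENNReal.ofReal_le_ofReal
        have h' := sq_le_sq.2 h
        have : |v - y| ^ 4 = (v - y) ^ 2 * (v - y) ^ 2 := by rw [← sq_abs (v - y)]; ring
        nlinarith [sq_nonneg u, sq_nonneg w, mul_le_mul_of_nonneg_right h' (sq_nonneg (v - y))])
      rwa [show ((4 : ℕ) : ℝ) * (t / 2) = 2 * t by push_cast; ring] at this
  refine le_trans ?_ (mul_le_mul' h1 (mul_le_mul' h3 h2))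
  have hMt : M ≠ ⊤ := ENNReal.ofReal_ne_top
  by_cases h0 : M = 0
  · rw [h0]
    rcases hs.eq_or_lt with h | h <;> rcases ht.eq_or_lt with h' | h'
    · have : 1 + β = 0 := by linarith
      simp [← h, ← h', this]
    · subst h
      simp [ENNReal.zero_rpow_of_neg (show -(t / 2) < 0 by linarith)]
    · subst h'
      simp [ENNReal.zero_rpow_of_neg (show -(s / 2) < 0 by linarith)]
    · simp [ENNReal.zero_rpow_of_neg (show -(s / 2) < 0 by linarith),
        ENNReal.zero_rpow_of_neg (show -(t / 2) < 0 by linarith)]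
  · rw [← ENNReal.rpow_add _ _ h0 hMt, ← ENNReal.rpow_add _ _ h0 hMt]
    apply le_of_eq; congr 1; linarith

lemma aux_prod (I : Set ℝ) (y s r : ℝ) :
    ∫⁻ p in I ×ˢ (I ×ˢ I), (ENNReal.ofReal |p.1|) ^ (-s) * (((ENNReal.ofReal |p.2.1|) ^ (-r) +
        (ENNReal.ofReal |p.2.1 - y|) ^ (-r)) * (ENNReal.ofReal |p.2.2|) ^ (-s)) =
    (∫⁻ x in I, (ENNReal.ofReal |x|) ^ (-s)) * (((∫⁻ x in I, (ENNReal.ofReal |x|) ^ (-r)) +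
      ∫⁻ x in I, (ENNReal.ofReal |x - y|) ^ (-r)) * ∫⁻ x in I, (ENNReal.ofReal |x|) ^ (-s)) := by
  have m1 : Measurable (fun x : ℝ => (ENNReal.ofReal |x|) ^ (-s)) := by fun_prop
  have m0 : Measurable (fun x : ℝ => (ENNReal.ofReal |x|) ^ (-r)) := by fun_prop
  have m2 : Measurable (fun x : ℝ => (ENNReal.ofReal |x|) ^ (-r) +
      (ENNReal.ofReal |x - y|) ^ (-r)) := by fun_prop
  have m3 : Measurable (fun q : ℝ × ℝ => ((ENNReal.ofReal |q.1|) ^ (-r) +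
      (ENNReal.ofReal |q.1 - y|) ^ (-r)) * (ENNReal.ofReal |q.2|) ^ (-s)) :=
    (m2.comp measurable_fst).mul (m1.comp measurable_snd)
  rw [← lintegral_add_left m0, ← lintegral_prod_mul m2.aemeasurable m1.aemeasurable,
    ← lintegral_prod_mul m1.aemeasurable m3.aemeasurable,
    Measure.prod_restrict, Measure.prod_restrict]
  rfl

lemma aux_sub : {p : ℝ × ℝ × ℝ | p.1 ^ 2 + p.2.1 ^ 2 + p.2.2 ^ 2 < 1} ⊆
    Set.Ioo (-1 : ℝ) 1 ×ˢ (Set.Ioo (-1 : ℝ) 1 ×ˢ Set.Ioo (-1 : ℝ) 1) := by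
  rintro ⟨a, b, c⟩ h
  replace h : a ^ 2 + b ^ 2 + c ^ 2 < 1 := h
  have key : ∀ x : ℝ, x ^ 2 < 1 → x ∈ Set.Ioo (-1 : ℝ) 1 := fun x hx => by
    rw [Set.mem_Ioo, ← abs_lt]
    exact (sq_lt_one_iff_abs_lt_one x).1 hx
  exact ⟨key _ (by nlinarith [sq_nonneg b, sq_nonneg c]),
    key _ (by nlinarith [sq_nonneg a, sq_nonneg c]),
    key _ (by nlinarith [sq_nonneg b, sq_nonneg a])⟩

/-- For every `0 ≤ β < 1/4` there is `C < ∞` such that for every `y₁ ∈ ℝ`: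
`∫∫∫_B (u₁² + u₂² + v₁²(v₁−y₁)²)^{−(1+β)} du₁ dv₁ du₂ ≤ C`, where
`B = {u₁² + v₁² + u₂² < 1}` is the unit ball of `ℝ³` (coordinates `p = (u₁, v₁, u₂)`);
the integrand is `+∞` where `u₁² + u₂² + v₁²(v₁−y₁)² = 0`. -/
theorem stmt8 (β : ℝ) (hβ0 : 0 ≤ β) (hβ : β < 1 / 4) :
    ∃ C : ℝ, ∀ y₁ : ℝ,
      ∫⁻ p in {p : ℝ × ℝ × ℝ | p.1 ^ 2 + p.2.1 ^ 2 + p.2.2 ^ 2 < 1},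
          (ENNReal.ofReal
              (p.1 ^ 2 + p.2.2 ^ 2 + p.2.1 ^ 2 * (p.2.1 - y₁) ^ 2)) ^ (-(1 + β))
        ≤ ENNReal.ofReal C := by
  obtain ⟨s, hs⟩ : ∃ s : ℝ, s = (7 / 4 + β) / 2 := ⟨_, rfl⟩
  obtain ⟨t, ht⟩ : ∃ t : ℝ, t = 1 / 4 + β := ⟨_, rfl⟩
  have hs0 : 0 ≤ s := by linarith
  have ht0 : 0 ≤ t := by linarith
  have hst : s + s + t = 2 * (1 + β) := by rw [hs, ht]; ring
  have hKs := aux_fin s (by linarith)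
  have hKt := aux_fin (2 * t) (by linarith)
  have hb := fun y => aux_shift (2 * t) y (by linarith)
  have hp := fun y => aux_prod (Set.Ioo (-1) 1) y s (2 * t)
  generalize (∫⁻ x in Set.Ioo (-1 : ℝ) 1, (ENNReal.ofReal |x|) ^ (-s)) = A at *
  generalize (∫⁻ x in Set.Ioo (-1 : ℝ) 1, (ENNReal.ofReal |x|) ^ (-(2 * t))) = B at *
  have hDt : A * ((B + (2 + B)) * A) ≠ ⊤ := by
    refine ENNReal.mul_ne_top hKs.ne (ENNReal.mul_ne_top ?_ hKs.ne)
    simp [hKt.ne]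
  refine ⟨(A * ((B + (2 + B)) * A)).toReal, fun y => ?_⟩
  rw [ENNReal.ofReal_toReal hDt]
  refine (lintegral_mono_set aux_sub).trans ?_
  have hpt := fun p : ℝ × ℝ × ℝ => aux_main β s t p.1 p.2.2 p.2.1 y hs0 ht0 hst
  refine (lintegral_mono hpt).trans ?_
  refine (hp y).le.trans ?_
  exact mul_le_mul' le_rfl (mul_le_mul' (add_le_add le_rfl (hb y)) le_rfl)
end

section
/- Fix m ∈ (1,2). There exists a constant c > 0 such that for all w, z ∈ bD_m: Re Δ(w,z) ≥ c·|w−z|², where |w−z| is the Euclidean distance in ℂ² ≅ ℝ⁴. -/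
open MeasureTheory Complex
open scoped ENNReal

noncomputable section

/-- The defining function `ρ(w) = |w₂|² + |Re w₁|^m + (Im w₁)² − 1`. -/
def rhom (m : ℝ) (w : C2) : ℝ := ‖w 1‖ ^ 2 + |(w 0).re| ^ m + (w 0).im ^ 2 - 1

/-- The domain `D_m = {ρ < 0}`. -/
def Dm (m : ℝ) : Set C2 := {w | rhom m w < 0}

/-- The boundary `bD_m = {ρ = 0}`. -/
def bDm (m : ℝ) : Set C2 := {w | rhom m w = 0}

/-- The Cauchy–Leray denominator
`Δ(w,z) = ((m/2)|u₁|^{m−1}·sgn(u₁) − i v₁)(w₁−z₁) + conj(w₂)(w₂−z₂)`. -/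
def Deltam (m : ℝ) (w z : C2) : ℂ :=
  ((m / 2 * |(w 0).re| ^ (m - 1) * Real.sign (w 0).re : ℝ) - I * ((w 0).im : ℂ))
      * (w 0 - z 0)
    + (starRingEnd ℂ) (w 1) * (w 1 - z 1)

/-- The real gradient `∇ρ` on `ℝ⁴ ≅ ℂ²`, written as a vector in `ℂ²`:
`∇ρ(w) = (m|u₁|^{m−1} sgn(u₁) + 2i v₁, 2w₂)`. -/
def gradRhom (m : ℝ) (w : C2) : C2 :=
  (WithLp.equiv 2 (Fin 2 → ℂ)).symm
    ![(m * |(w 0).re| ^ (m - 1) * Real.sign (w 0).re : ℝ)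
        + (2 * (w 0).im : ℝ) * I, 2 * w 1]

/-- The inward unit normal `N(z) = −∇ρ(z)/|∇ρ(z)|`. -/
def Nm (m : ℝ) (z : C2) : C2 := (-‖gradRhom m z‖⁻¹ : ℝ) • gradRhom m z
theorem aux_nonneg (a : ℝ) (ha0 : 0 < a) (ha1 : a < 1) (s t : ℝ) (hs : 0 ≤ s) (hst : s ≤ t)
    (ht : t ≤ 1) : s ^ a - a * s ≤ t ^ a - a * t := by
  rcases eq_or_lt_of_le (hs.trans hst) with h0 | h0
  · have : s = 0 := by linarith
    subst this; subst h0; exact le_rfl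
  have hr0 : 0 ≤ s / t := by positivity
  have hr1 : s / t ≤ 1 := by rw [div_le_one h0]; exact hst
  have hb := rpow_one_add_le_one_add_mul_self (s := s / t - 1) (by linarith) ha0.le ha1.le
  have e1 : 1 + (s / t - 1) = s / t := by ring
  rw [e1, Real.div_rpow hs h0.le] at hb
  have hta : t ≤ t ^ a := by
    have := Real.rpow_le_rpow_of_exponent_ge h0 ht ha1.le
    simpa using this
  have htp : 0 < t ^ a := Real.rpow_pos_of_pos h0 a
  rw [div_le_iff₀ htp] at hb
  have e2 : a * s = a * (s / t) * t := by field_simp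
  rw [e2]
  have : 0 ≤ a * (1 - s / t) * (t ^ a - t) :=
    mul_nonneg (mul_nonneg ha0.le (by linarith)) (by linarith)
  nlinarith

theorem aux_pow (m : ℝ) (hm1 : 1 < m) (t : ℝ) (ht : 0 ≤ t) :
    |t| ^ (m - 2) * t = t ^ (m - 1) := by
  rcases eq_or_lt_of_le ht with h | h
  · subst h
    rw [Real.zero_rpow (by linarith)]; simp
  · rw [abs_of_pos h, ← Real.rpow_add_one h.ne']
    congr 1; ring

theorem aux_mono (m : ℝ) (hm1 : 1 < m) (hm2 : m < 2) (s t : ℝ) (hs : -1 ≤ s) (hst : s ≤ t)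
    (ht : t ≤ 1) :
    |s| ^ (m - 2) * s - (m - 1) * s ≤ |t| ^ (m - 2) * t - (m - 1) * t := by
  have key : ∀ x y : ℝ, 0 ≤ x → x ≤ y → y ≤ 1 →
      |x| ^ (m - 2) * x - (m - 1) * x ≤ |y| ^ (m - 2) * y - (m - 1) * y := by
    intro x y hx hxy hy
    rw [aux_pow m hm1 x hx, aux_pow m hm1 y (hx.trans hxy)]
    exact aux_nonneg (m - 1) (by linarith) (by linarith) x y hx hxy hy
  rcases le_total 0 s with h | h
  · exact key s t h hst ht
  rcases le_total t 0 with h' | h'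
  · have := key (-t) (-s) (by linarith) (by linarith) (by linarith)
    rw [abs_neg, abs_neg] at this
    linarith
  · have h1 := key 0 t le_rfl h' ht
    have h2 := key 0 (-s) le_rfl (by linarith) (by linarith)
    rw [abs_neg] at h2
    simp only [mul_zero, sub_zero] at h1 h2
    linarith

theorem aux_taylor (m : ℝ) (hm1 : 1 < m) (hm2 : m < 2) (u t : ℝ) (hu : |u| ≤ 1) (ht : |t| ≤ 1) :
    m * (m - 1) / 2 * (t - u) ^ 2 ≤ |t| ^ m - |u| ^ m - m * |u| ^ (m - 2) * u * (t - u) := by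
  have hd : ∀ x : ℝ, HasDerivAt (fun x : ℝ => |x| ^ m - m * (m - 1) / 2 * x ^ 2)
      (m * (|x| ^ (m - 2) * x - (m - 1) * x)) x := by
    intro x
    have h := (hasDerivAt_abs_rpow x hm1).sub ((hasDerivAt_pow 2 x).const_mul (m * (m - 1) / 2))
    have e : m * (|x| ^ (m - 2) * x - (m - 1) * x) = m * |x| ^ (m - 2) * x
        - m * (m - 1) / 2 * (((2 : ℕ) : ℝ) * x ^ (2 - 1)) := by
      norm_num; ring
    rw [e]; exact h
  have hc : Continuous (fun x : ℝ => |x| ^ m - m * (m - 1) / 2 * x ^ 2) :=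
    continuous_iff_continuousAt.2 fun x => (hd x).continuousAt
  rw [abs_le] at hu ht
  rcases lt_trichotomy u t with h | h | h
  · obtain ⟨x, ⟨hx1, hx2⟩, hx⟩ := exists_hasDerivAt_eq_slope _ _ h hc.continuousOn
      (fun x _ => hd x)
    rw [eq_div_iff (by linarith)] at hx
    have := aux_mono m hm1 hm2 u x (by linarith) (by linarith) (by linarith)
    have h2 : 0 ≤ m * (t - u) := mul_nonneg (by linarith) (by linarith)
    have h3 := mul_le_mul_of_nonneg_left this h2
    linarith
  · subst h; simp
  · obtain ⟨x, ⟨hx1, hx2⟩, hx⟩ := exists_hasDerivAt_eq_slope _ _ h hc.continuousOn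
      (fun x _ => hd x)
    rw [eq_div_iff (by linarith)] at hx
    have := aux_mono m hm1 hm2 x u (by linarith) (by linarith) (by linarith)
    have h2 : 0 ≤ m * (u - t) := mul_nonneg (by linarith) (by linarith)
    have h3 := mul_le_mul_of_nonneg_left this h2
    linarith

theorem aux_sign (m : ℝ) (u : ℝ) (hm1 : 1 < m) :
    |u| ^ (m - 1) * Real.sign u = |u| ^ (m - 2) * u := by
  rcases lt_trichotomy u 0 with h | h | h
  · have := aux_pow m hm1 (-u) (by linarith)
    rw [Real.sign_of_neg h, abs_of_neg h]
    rw [abs_neg, abs_of_neg h] at this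
    linarith
  · subst h; simp
  · rw [Real.sign_of_pos h, aux_pow m hm1 u h.le, abs_of_pos h, mul_one]

theorem aux_bd (m : ℝ) (hm1 : 1 < m) (w : C2) (hw : w ∈ bDm m) : |(w 0).re| ≤ 1 := by
  have h : ‖w 1‖ ^ 2 + |(w 0).re| ^ m + (w 0).im ^ 2 - 1 = 0 := hw
  by_contra hc
  push Not at hc
  have := Real.one_lt_rpow hc (by linarith : 0 < m)
  nlinarith [sq_nonneg ‖w 1‖, sq_nonneg (w 0).im]

/-- Fix `m ∈ (1,2)`. There is `c > 0` such that for all `w, z ∈ bD_m`: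
`Re Δ(w,z) ≥ c·|w−z|²` (Euclidean distance in `ℂ² ≅ ℝ⁴`). -/
theorem stmt13 (m : ℝ) (hm1 : 1 < m) (hm2 : m < 2) :
    ∃ c : ℝ, 0 < c ∧ ∀ w ∈ bDm m, ∀ z ∈ bDm m,
      c * ‖w - z‖ ^ 2 ≤ (Deltam m w z).re := by
  refine ⟨m * (m - 1) / 4, by nlinarith, fun w hw z hz => ?_⟩
  have hT := aux_taylor m hm1 hm2 _ _ (aux_bd m hm1 w hw) (aux_bd m hm1 z hz)
  have h1 : ‖w 1‖ ^ 2 + |(w 0).re| ^ m + (w 0).im ^ 2 - 1 = 0 := hw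
  have h2 : ‖z 1‖ ^ 2 + |(z 0).re| ^ m + (z 0).im ^ 2 - 1 = 0 := hz
  have hs := aux_sign m (w 0).re hm1
  have hn : ‖w - z‖ ^ 2 = ((w 0).re - (z 0).re) ^ 2 + ((w 0).im - (z 0).im) ^ 2
      + (((w 1).re - (z 1).re) ^ 2 + ((w 1).im - (z 1).im) ^ 2) := by
    rw [EuclideanSpace.norm_sq_eq, Fin.sum_univ_two, Complex.sq_norm, Complex.sq_norm,
      Complex.normSq_apply, Complex.normSq_apply]
    simp only [PiLp.sub_apply, Complex.sub_re, Complex.sub_im]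
    ring
  have hre : (Deltam m w z).re = m / 2 * (|(w 0).re| ^ (m - 2) * (w 0).re) *
      ((w 0).re - (z 0).re) + (w 0).im * ((w 0).im - (z 0).im)
      + ((w 1).re * ((w 1).re - (z 1).re) + (w 1).im * ((w 1).im - (z 1).im)) := by
    rw [← hs]
    unfold Deltam
    rw [mul_assoc (m / 2)]
    generalize |(w 0).re| ^ (m - 1) * Real.sign (w 0).re = q
    simp only [Complex.add_re, Complex.mul_re, Complex.sub_re, Complex.sub_im, Complex.ofReal_re,
      Complex.ofReal_im, Complex.mul_im, Complex.I_re, Complex.I_im, Complex.conj_re,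
      Complex.conj_im]
    ring
  rw [Complex.sq_norm, Complex.normSq_apply] at h1 h2
  rw [hn, hre]
  have hm : m * (m - 1) / 4 ≤ 1 / 2 := by nlinarith
  have hp := mul_le_mul_of_nonneg_right hm (by positivity :
    0 ≤ ((w 0).im - (z 0).im) ^ 2 + (((w 1).re - (z 1).re) ^ 2 + ((w 1).im - (z 1).im) ^ 2))
  linarith

end
end

section
/- Fix m with 3/2 < m < 2. There is a constant C < ∞ such that for every z ∈ bD_m: ∫_{bD_m} |Re w₁|^{m−2} · |w−z|^{−2} dH³(w) ≤ C. In particular this integral is finite for every z ∈ bD_m. -/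
open MeasureTheory Complex
open scoped ENNReal

noncomputable section

lemma aux_rpow_anti {x y : ℝ≥0∞} {q : ℝ} (h : x ≤ y) (hq : 0 ≤ q) : y ^ (-q) ≤ x ^ (-q) := by
  rw [ENNReal.rpow_neg, ENNReal.rpow_neg]
  exact ENNReal.inv_le_inv.mpr (ENNReal.rpow_le_rpow h hq)

lemma aux_split {d x y t : ℝ≥0∞} (hd : d ≠ ⊤) (hx : x ≤ d) (hy : y ≤ d) (ht : t ≤ d) :
    d ^ (-2 : ℝ) ≤ x ^ (-(1/2) : ℝ) * (y ^ (-(3/4) : ℝ) * t ^ (-(3/4) : ℝ)) := by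
  by_cases h0 : d = 0
  · subst h0
    have hx0 : x = 0 := by simpa using hx
    have hy0 : y = 0 := by simpa using hy
    have ht0 : t = 0 := by simpa using ht
    subst hx0 hy0 ht0
    rw [ENNReal.zero_rpow_of_neg (by norm_num), ENNReal.zero_rpow_of_neg (by norm_num),
      ENNReal.zero_rpow_of_neg (by norm_num)]
    simp
  · have e : (-2 : ℝ) = -(1/2) + (-(3/4) + -(3/4)) := by norm_num
    rw [e, ENNReal.rpow_add _ _ h0 hd, ENNReal.rpow_add _ _ h0 hd]
    gcongr ?_ * (?_ * ?_)
    · exact aux_rpow_anti hx (by norm_num)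
    · exact aux_rpow_anti hy (by norm_num)
    · exact aux_rpow_anti ht (by norm_num)

lemma aux_young {a b : ℝ≥0∞} (ha : a ≠ ⊤) (hb : b ≠ ⊤) {p : ℝ} (hp : 0 ≤ p) :
    a ^ (-p) * b ^ (-(1/2) : ℝ) ≤ a ^ (-(p + 1/2)) + b ^ (-(p + 1/2)) := by
  have key : ∀ c : ℝ≥0∞, c ≠ ⊤ → c ^ (-p) * c ^ (-(1/2) : ℝ) ≤ c ^ (-(p + 1/2)) := by
    intro c hc
    by_cases h0 : c = 0
    · subst h0
      rw [ENNReal.zero_rpow_of_neg (y := -(p + 1/2)) (by linarith)]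
      exact le_top
    · rw [← ENNReal.rpow_add _ _ h0 hc]
      apply le_of_eq
      congr 1
      ring
  rcases le_total a b with h | h
  · calc _ ≤ a ^ (-p) * a ^ (-(1/2) : ℝ) := by
          exact mul_le_mul' le_rfl (aux_rpow_anti h (by norm_num))
      _ ≤ _ := (key a ha).trans le_self_add
  · calc _ ≤ b ^ (-p) * b ^ (-(1/2) : ℝ) := by
          exact mul_le_mul' (aux_rpow_anti h hp) le_rfl
      _ ≤ _ := (key b hb).trans le_add_self

/-- the one-dimensional kernel -/
def ker1 (q s t : ℝ) : ℝ≥0∞ :=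
  (Set.Icc (-1 : ℝ) 1).indicator (fun t => (ENNReal.ofReal |t - s|) ^ (-q)) t

lemma ker1_meas (q s : ℝ) : Measurable (ker1 q s) := by
  unfold ker1
  apply Measurable.indicator _ measurableSet_Icc
  fun_prop

/-- the one-dimensional constant -/
def M1 (q : ℝ) : ℝ≥0∞ := ∫⁻ t in Set.Icc (-2 : ℝ) 2, (ENNReal.ofReal |t|) ^ (-q)

lemma ker1_le (q s : ℝ) (hs : |s| ≤ 1) : ∫⁻ t, ker1 q s t ≤ M1 q := by
  have h1 := abs_le.mp hs
  unfold M1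
  rw [← lintegral_indicator measurableSet_Icc,
    ← lintegral_sub_right_eq_self (μ := volume)
      ((Set.Icc (-2 : ℝ) 2).indicator fun t => (ENNReal.ofReal |t|) ^ (-q)) s]
  apply lintegral_mono
  intro t
  unfold ker1
  beta_reduce
  by_cases ht : t ∈ Set.Icc (-1 : ℝ) 1
  · rw [Set.indicator_of_mem ht, Set.indicator_of_mem]
    constructor <;> linarith [ht.1, ht.2, h1.1, h1.2]
  · rw [Set.indicator_of_notMem ht]
    exact zero_le

lemma M1_lt (q : ℝ) (hq1 : q < 1) : M1 q < ⊤ := by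
  have hpos : ∫⁻ t in Set.Ioc (0 : ℝ) 2, (ENNReal.ofReal |t|) ^ (-q) < ⊤ := by
    have h := (intervalIntegral.intervalIntegrable_rpow' (a := 0) (b := 2)
      (r := -q) (by linarith)).1.lintegral_lt_top
    refine lt_of_le_of_lt (le_of_eq ?_) h
    apply setLIntegral_congr_fun measurableSet_Ioc
    intro t ht
    simp only
    rw [abs_of_pos ht.1, ENNReal.ofReal_rpow_of_pos ht.1]
  have hneg : ∫⁻ t in Set.Ico (-2 : ℝ) 0, (ENNReal.ofReal |t|) ^ (-q) < ⊤ := by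
    refine lt_of_le_of_lt (le_of_eq ?_) hpos
    rw [← lintegral_indicator measurableSet_Ico, ← lintegral_indicator measurableSet_Ioc,
      ← (Measure.measurePreserving_neg (volume : Measure ℝ)).lintegral_comp_emb
        (MeasurableEquiv.neg ℝ).measurableEmbedding]
    apply lintegral_congr
    intro t
    by_cases ht : t ∈ Set.Ioc (0:ℝ) 2
    · rw [Set.indicator_of_mem ht, Set.indicator_of_mem, abs_neg]
      constructor <;> linarith [ht.1, ht.2]
    · rw [Set.indicator_of_notMem ht, Set.indicator_of_notMem]
      intro h
      apply ht
      constructor <;> linarith [h.1, h.2]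
  have hsub : Set.Icc (-2:ℝ) 2 ⊆ (Set.Ico (-2 : ℝ) 0 ∪ Set.Ioc (0:ℝ) 2) ∪ {0} := by
    intro t ht
    rcases lt_trichotomy t 0 with h | h | h
    · exact Or.inl (Or.inl ⟨ht.1, h⟩)
    · exact Or.inr h
    · exact Or.inl (Or.inr ⟨h, ht.2⟩)
  unfold M1
  refine (lintegral_mono_set hsub).trans_lt ?_
  refine (lintegral_union_le _ _ _).trans_lt ?_
  refine ENNReal.add_lt_top.mpr ⟨(lintegral_union_le _ _ _).trans_lt
    (ENNReal.add_lt_top.mpr ⟨hneg, hpos⟩), ?_⟩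
  simp

lemma aux_prod3 (f g h : ℝ → ℝ≥0∞) (hf : Measurable f) (hg : Measurable g) (hh : Measurable h) :
    ∫⁻ x : Fin 3 → ℝ, f (x 0) * (g (x 1) * h (x 2))
      = (∫⁻ t, f t) * ((∫⁻ t, g t) * (∫⁻ t, h t)) := by
  have e2 : ∫⁻ x : Fin 2 → ℝ, g (x 0) * h (x 1) = (∫⁻ t, g t) * (∫⁻ t, h t) := by
    rw [← lintegral_prod_mul hg.aemeasurable hh.aemeasurable]
    exact (volume_preserving_finTwoArrow ℝ).lintegral_comp (f := fun p => g p.1 * h p.2)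
      (by fun_prop)
  rw [← e2, ← lintegral_prod_mul hf.aemeasurable (by fun_prop)]
  exact (volume_preserving_piFinSuccAbove (fun _ : Fin 3 => ℝ) 0).lintegral_comp
      (f := fun p => f p.1 * (g (p.2 0) * h (p.2 1))) (by fun_prop)

/-- real coordinates -/
def cc (w : C2) : Fin 4 → ℝ := ![(w 0).re, (w 0).im, (w 1).re, (w 1).im]

/-- exponents -/
def pp (m : ℝ) : Fin 4 → ℝ := ![m, 2, 2, 2]

/-- projection forgetting coordinate i -/
def PP (i : Fin 4) (w : C2) : Fin 3 → ℝ := fun j => cc w (i.succAbove j)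

lemma cc_cont (i : Fin 4) : Continuous (fun w => cc w i) := by
  fin_cases i <;> simp [cc] <;> fun_prop

lemma PP_meas (i : Fin 4) : Measurable (PP i) := by
  apply Continuous.measurable
  exact continuous_pi fun j => cc_cont _

lemma cc_sub (w z : C2) (j : Fin 4) : cc (w - z) j = cc w j - cc z j := by
  fin_cases j <;> simp [cc]

lemma norm_sq_cc (w : C2) : ‖w‖ ^ 2 = ∑ j, cc w j ^ 2 := by
  rw [EuclideanSpace.norm_sq_eq]
  simp [cc, Fin.sum_univ_four, Complex.sq_norm, Complex.normSq_apply]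
  ring

lemma abs_cc_le (w : C2) (j : Fin 4) : |cc w j| ≤ ‖w‖ := by
  apply abs_le_of_sq_le_sq _ (norm_nonneg _)
  rw [norm_sq_cc]
  exact Finset.single_le_sum (f := fun j => cc w j ^ 2) (fun _ _ => sq_nonneg _) (Finset.mem_univ j)

lemma norm_le_cc (w : C2) : ‖w‖ ≤ ∑ j, |cc w j| := by
  refine (sq_le_sq₀ (norm_nonneg _) (Finset.sum_nonneg fun _ _ => abs_nonneg _)).mp ?_
  rw [norm_sq_cc]
  simp_rw [← sq_abs (cc w _)]
  simp only [Fin.sum_univ_four]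
  have h0 := abs_nonneg (cc w 0)
  have h1 := abs_nonneg (cc w 1)
  have h2 := abs_nonneg (cc w 2)
  have h3 := abs_nonneg (cc w 3)
  have := mul_nonneg h0 h1
  have := mul_nonneg h0 h2
  have := mul_nonneg h0 h3
  have := mul_nonneg h1 h2
  have := mul_nonneg h1 h3
  have := mul_nonneg h2 h3
  nlinarith

lemma mem_bDm_iff (m : ℝ) (w : C2) : w ∈ bDm m ↔ ∑ j, |cc w j| ^ pp m j = 1 := by
  have h2 : ∀ x : ℝ, |x| ^ (2 : ℝ) = x ^ 2 := by
    intro x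
    rw [show (2:ℝ) = ((2:ℕ):ℝ) by norm_num, Real.rpow_natCast, sq_abs]
  simp only [bDm, Set.mem_ofPred_eq, rhom, Fin.sum_univ_four, cc, pp]
  simp only [Matrix.cons_val, h2, Complex.sq_norm, Complex.normSq_apply]
  constructor <;> intro h <;> linarith

/-- `|t|^p` is 2-Lipschitz on the unit interval. -/
lemma pow_lip_aux {p s t : ℝ} (hp1 : 1 ≤ p) (hp2 : p ≤ 2) (ht : 0 ≤ t) (hts : t ≤ s) (hs : s ≤ 1) :
    s ^ p - t ^ p ≤ 2 * (s - t) := by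
  rcases eq_or_lt_of_le (ht.trans hts) with h0 | h0
  · have : t = 0 := by linarith
    subst this; subst h0; simp
  have hb := one_add_mul_self_le_rpow_one_add (s := t / s - 1)
    (by have := div_nonneg ht h0.le; linarith) hp1
  rw [show 1 + (t / s - 1) = t / s by ring, Real.div_rpow ht h0.le] at hb
  have hsp : 0 < s ^ p := Real.rpow_pos_of_pos h0 p
  rw [le_div_iff₀ hsp] at hb
  have hle : s ^ p ≤ s := by
    simpa using Real.rpow_le_rpow_of_exponent_ge h0 hs hp1
  have e : s ^ p - t ^ p ≤ p * (s ^ p / s) * (s - t) := by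
    have : p * (s ^ p / s) * (s - t) = p * (1 - t / s) * s ^ p := by field_simp
    rw [this]; linarith
  have h1 : s ^ p / s ≤ 1 := by rw [div_le_one h0]; exact hle
  have h2 : p * (s ^ p / s) ≤ 2 := by
    have : 0 ≤ s ^ p / s := by positivity
    nlinarith
  have : 0 ≤ s - t := by linarith
  nlinarith

lemma pow_lip {p s t : ℝ} (hp1 : 1 ≤ p) (hp2 : p ≤ 2) (ht : |t| ≤ 1) (hs : |s| ≤ 1) :
    |(|s| ^ p - |t| ^ p)| ≤ 2 * |s - t| := by
  have h := abs_abs_sub_abs_le_abs_sub s t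
  rcases le_total |t| |s| with h1 | h1
  · have := pow_lip_aux hp1 hp2 (abs_nonneg t) h1 hs
    rw [abs_of_nonneg (sub_nonneg.mpr (Real.rpow_le_rpow (abs_nonneg _) h1 (by linarith)))]
    rw [abs_of_nonneg (by linarith)] at h
    linarith
  · have := pow_lip_aux hp1 hp2 (abs_nonneg s) h1 ht
    rw [abs_sub_comm, abs_of_nonneg (sub_nonneg.mpr
      (Real.rpow_le_rpow (abs_nonneg _) h1 (by linarith)))]
    rw [abs_sub_comm, abs_of_nonneg (by linarith)] at h
    linarith

lemma pow_anti_aux {p s t : ℝ} (hp1 : 1 ≤ p) (ht : 0 < t) (hts : t ≤ s) (hs : s ≤ 1)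
    (h4 : 1/4 ≤ s ^ p) : s - t ≤ 4 * (s ^ p - t ^ p) := by
  have h0 : 0 < s := ht.trans_le hts
  have e1 : s ^ p = s * s ^ (p - 1) := by
    rw [← Real.rpow_one_add' h0.le (by linarith)]; congr 1; ring
  have e2 : t ^ p = t * t ^ (p - 1) := by
    rw [← Real.rpow_one_add' ht.le (by linarith)]; congr 1; ring
  have h1 : t ^ (p-1) ≤ s ^ (p-1) := Real.rpow_le_rpow ht.le hts (by linarith)
  have h2 : s ^ p ≤ s ^ (p-1) := Real.rpow_le_rpow_of_exponent_ge h0 hs (by linarith)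
  have h3 : t * t ^ (p-1) ≤ t * s ^ (p-1) := by gcongr
  have h5 : (s - t) * (1/4) ≤ (s - t) * s ^ (p-1) :=
    mul_le_mul_of_nonneg_left (by linarith) (by linarith)
  rw [e1, e2]
  nlinarith

lemma pow_anti {p s t : ℝ} (hp1 : 1 ≤ p) (hst : 0 < s * t) (ht : |t| ≤ 1) (hs : |s| ≤ 1)
    (h4 : 1/4 ≤ |s| ^ p) (h4' : 1/4 ≤ |t| ^ p) :
    |s - t| ≤ 4 * |(|s| ^ p - |t| ^ p)| := by
  have hs0 : s ≠ 0 := by rintro rfl; simp at hst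
  have ht0 : t ≠ 0 := by rintro rfl; simp at hst
  have e : |s - t| = |(|s| - |t|)| := by
    rcases pos_and_pos_or_neg_and_neg_of_mul_pos hst with ⟨a, b⟩ | ⟨a, b⟩
    · rw [abs_of_pos a, abs_of_pos b]
    · rw [abs_of_neg a, abs_of_neg b, ← abs_neg]; congr 1; ring
  rw [e]
  rcases le_total |t| |s| with h1 | h1
  · have := pow_anti_aux hp1 (abs_pos.mpr ht0) h1 hs h4
    rw [abs_of_nonneg (sub_nonneg.mpr h1)]
    exact this.trans (by gcongr; exact le_abs_self _)
  · have := pow_anti_aux hp1 (abs_pos.mpr hs0) h1 ht h4'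
    rw [abs_sub_comm, abs_of_nonneg (sub_nonneg.mpr h1), abs_sub_comm]
    exact this.trans (by gcongr; exact le_abs_self _)

/-- the pieces -/
def SS (m : ℝ) (i : Fin 4) (σ : Bool) : Set C2 :=
  {w | w ∈ bDm m ∧ 1/4 ≤ |cc w i| ^ pp m i ∧ (if σ then 0 < cc w i else cc w i < 0)}

lemma pp_bd {m : ℝ} (hm1 : 3/2 < m) (hm2 : m < 2) (j : Fin 4) : 1 ≤ pp m j ∧ pp m j ≤ 2 := by
  fin_cases j <;> simp [pp]
  constructor <;> linarith

lemma cc_bd {m : ℝ} (hm1 : 3/2 < m) (hm2 : m < 2) {w : C2} (hw : w ∈ bDm m) (j : Fin 4) :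
    |cc w j| ≤ 1 := by
  rw [mem_bDm_iff] at hw
  have h := Finset.single_le_sum (f := fun j => |cc w j| ^ pp m j)
    (fun _ _ => Real.rpow_nonneg (abs_nonneg _) _) (Finset.mem_univ j)
  rw [hw] at h
  by_contra hc
  have := Real.one_lt_rpow (not_le.mp hc) (by linarith [(pp_bd hm1 hm2 j).1] : 0 < pp m j)
  linarith

lemma cover {m : ℝ} (hm1 : 3/2 < m) (hm2 : m < 2) :
    bDm m ⊆ ⋃ i : Fin 4 × Bool, SS m i.1 i.2 := by
  intro w hw
  have h := (mem_bDm_iff m w).mp hw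
  have : ∃ i, 1/4 ≤ |cc w i| ^ pp m i := by
    by_contra! hc
    have := Finset.sum_lt_sum_of_nonempty (s := Finset.univ) Finset.univ_nonempty
      (fun i _ => hc i)
    rw [h] at this
    norm_num at this
  obtain ⟨i, hi⟩ := this
  have hne : cc w i ≠ 0 := by
    intro h0
    rw [h0, abs_zero, Real.zero_rpow (by linarith [(pp_bd hm1 hm2 i).1])] at hi
    norm_num at hi
  rw [Set.mem_iUnion]
  rcases lt_or_gt_of_ne hne with h0 | h0
  · exact ⟨(i, false), hw, hi, by simpa using h0⟩
  · exact ⟨(i, true), hw, hi, by simpa using h0⟩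

lemma SS_anti {m : ℝ} (hm1 : 3/2 < m) (hm2 : m < 2) (i : Fin 4) (σ : Bool) {w z : C2}
    (hw : w ∈ SS m i σ) (hz : z ∈ SS m i σ) : ‖w - z‖ ≤ 27 * ‖PP i w - PP i z‖ := by
  obtain ⟨hwb, hw4, hwσ⟩ := hw
  obtain ⟨hzb, hz4, hzσ⟩ := hz
  have hst : 0 < cc w i * cc z i := by
    cases σ
    · simp at hwσ hzσ; exact mul_pos_of_neg_of_neg hwσ hzσ
    · simp at hwσ hzσ; exact mul_pos hwσ hzσ
  have hA := pow_anti (pp_bd hm1 hm2 i).1 hst (cc_bd hm1 hm2 hzb i) (cc_bd hm1 hm2 hwb i) hw4 hz4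
  have hj : ∀ j, |cc w (i.succAbove j) - cc z (i.succAbove j)| ≤ ‖PP i w - PP i z‖ := by
    intro j
    exact norm_le_pi_norm (PP i w - PP i z) j
  have hl : ∀ j, |(|cc w (i.succAbove j)| ^ pp m (i.succAbove j)
      - |cc z (i.succAbove j)| ^ pp m (i.succAbove j))| ≤ 2 * ‖PP i w - PP i z‖ := by
    intro j
    refine (pow_lip (pp_bd hm1 hm2 _).1 (pp_bd hm1 hm2 _).2 (cc_bd hm1 hm2 hzb _)
      (cc_bd hm1 hm2 hwb _)).trans ?_
    linarith [hj j]
  have h1 := (mem_bDm_iff m w).mp hwb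
  have h2 := (mem_bDm_iff m z).mp hzb
  rw [Fin.sum_univ_succAbove _ i, Fin.sum_univ_three] at h1 h2
  have hB : |(|cc w i| ^ pp m i - |cc z i| ^ pp m i)| ≤ 6 * ‖PP i w - PP i z‖ := by
    have a0 := abs_le.mp (hl 0)
    have a1 := abs_le.mp (hl 1)
    have a2 := abs_le.mp (hl 2)
    rw [abs_le]
    constructor <;> linarith [a0.1, a0.2, a1.1, a1.2, a2.1, a2.2]
  refine (norm_le_cc _).trans ?_
  simp_rw [cc_sub]
  rw [Fin.sum_univ_succAbove _ i, Fin.sum_univ_three]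
  linarith [hj 0, hj 1, hj 2]

lemma SS_push {m : ℝ} (hm1 : 3/2 < m) (hm2 : m < 2) (i : Fin 4) (σ : Bool)
    (g : (Fin 3 → ℝ) → ℝ≥0∞) (hg : Measurable g) :
    ∫⁻ w in SS m i σ, g (PP i w) ∂μH[3] ≤ (27 : ℝ≥0∞) ^ (3:ℝ) * ∫⁻ x, g x := by
  rw [← lintegral_map hg (PP_meas i), ← smul_eq_mul, ← lintegral_smul_measure]
  refine lintegral_mono' ?_ le_rfl
  rw [Measure.le_iff]
  intro B hB
  rw [Measure.map_apply (PP_meas i) hB, Measure.restrict_apply (PP_meas i hB)]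
  set A := PP i ⁻¹' B ∩ SS m i σ with hAdef
  have hAS : A ⊆ SS m i σ := Set.inter_subset_right
  have hinj : Set.InjOn (PP i) (SS m i σ) := by
    intro w hw z hz h
    have := SS_anti hm1 hm2 i σ hw hz
    rw [h, sub_self, norm_zero, mul_zero] at this
    exact sub_eq_zero.mp (norm_le_zero_iff.mp this)
  set G := Function.invFunOn (PP i) (SS m i σ) with hG
  have hGl : ∀ w ∈ SS m i σ, G (PP i w) = w := fun w hw => hinj.leftInvOn_invFunOn hw
  have hlip : LipschitzOnWith 27 G (PP i '' A) := by
    apply LipschitzOnWith.of_dist_le_mul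
    rintro _ ⟨w, hw, rfl⟩ _ ⟨z, hz, rfl⟩
    rw [hGl w (hAS hw), hGl z (hAS hz), dist_eq_norm, dist_eq_norm]
    exact SS_anti hm1 hm2 i σ (hAS hw) (hAS hz)
  have himg : G '' (PP i '' A) = A := by
    rw [Set.image_image]
    ext w
    constructor
    · rintro ⟨v, hv, rfl⟩
      simpa [hGl v (hAS hv)] using hv
    · intro hw
      exact ⟨w, hw, hGl w (hAS hw)⟩
  have h := hlip.hausdorffMeasure_image_le (d := 3) (by norm_num)
  rw [himg] at h
  refine h.trans ?_
  have hv : (μH[3] : Measure (Fin 3 → ℝ)) = volume := by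
    have := hausdorffMeasure_pi_real (ι := Fin 3)
    simpa using this
  rw [hv]
  simp only [Measure.smul_apply, smul_eq_mul]
  have : PP i '' A ⊆ B := by
    rintro _ ⟨w, hw, rfl⟩; exact hw.1
  gcongr
  simp

/-- dominating function -/
def GG (m : ℝ) (y x : Fin 3 → ℝ) : ℝ≥0∞ :=
  (ker1 (5/2 - m) 0 (x 0) + ker1 (5/2 - m) (y 0) (x 0) + ker1 (1/2) (y 0) (x 0))
    * (ker1 (3/4) (y 1) (x 1) * ker1 (3/4) (y 2) (x 2))

lemma GG_meas (m : ℝ) (y : Fin 3 → ℝ) : Measurable (GG m y) := by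
  have := ker1_meas
  unfold GG
  fun_prop

/-- the bounding constant -/
def CC (m : ℝ) : ℝ≥0∞ := (M1 (5/2 - m) + M1 (5/2 - m) + M1 (1/2)) * (M1 (3/4) * M1 (3/4))

lemma GG_int (m : ℝ) (y : Fin 3 → ℝ) (hy : ∀ j, |y j| ≤ 1) : ∫⁻ x, GG m y x ≤ CC m := by
  have hk := ker1_meas
  unfold GG CC
  rw [aux_prod3 (fun t => ker1 (5/2 - m) 0 t + ker1 (5/2 - m) (y 0) t + ker1 (1/2) (y 0) t)
    _ _ (by fun_prop) (hk _ _) (hk _ _)]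
  rw [lintegral_add_left (by fun_prop), lintegral_add_left (by fun_prop)]
  gcongr <;> apply ker1_le <;> first | exact hy _ | simp

lemma pt_bound {m : ℝ} (hm1 : 3/2 < m) (hm2 : m < 2) (i : Fin 4) (σ : Bool) {w z : C2}
    (hw : w ∈ SS m i σ) (hz : z ∈ bDm m) :
    (ENNReal.ofReal |(w 0).re|) ^ (m - 2) * (ENNReal.ofReal ‖w - z‖) ^ (-2 : ℝ)
      ≤ 4 * GG m (PP i z) (PP i w) := by
  obtain ⟨hwb, hw4, -⟩ := hw
  have hmem : ∀ j, PP i w j ∈ Set.Icc (-1:ℝ) 1 := fun j => abs_le.mp (cc_bd hm1 hm2 hwb _)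
  have hd : ∀ j, ENNReal.ofReal |PP i w j - PP i z j| ≤ ENNReal.ofReal ‖w - z‖ := by
    intro j
    apply ENNReal.ofReal_le_ofReal
    have := abs_cc_le (w - z) (i.succAbove j)
    rwa [cc_sub] at this
  have hs := aux_split ENNReal.ofReal_ne_top (hd 0) (hd 1) (hd 2)
  have hk : ∀ q s j, ker1 q s (PP i w j) = (ENNReal.ofReal |PP i w j - s|) ^ (-q) := by
    intro q s j
    unfold ker1
    rw [Set.indicator_of_mem (hmem j)]
  unfold GG
  simp only [hk]
  refine (mul_le_mul_right hs _).trans ?_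
  rw [← mul_assoc, ← mul_assoc 4]
  refine mul_le_mul_left ?_ _
  rw [show m - 2 = -(2 - m) by ring]
  by_cases hi : i = 0
  · subst hi
    have h4 : (ENNReal.ofReal |(w 0).re|) ^ (-(2 - m)) ≤ 4 := by
      have h1 : (1/4 : ℝ) ≤ |(w 0).re| ^ m := hw4
      have h2 : |(w 0).re| ≤ 1 := cc_bd hm1 hm2 hwb 0
      have h3 : (0:ℝ) < |(w 0).re| := by
        rcases (abs_nonneg (w 0).re).eq_or_lt with h | h
        · rw [← h, Real.zero_rpow (by linarith)] at h1; norm_num at h1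
        · exact h
      have h5 : |(w 0).re| ^ m ≤ |(w 0).re| ^ (2 - m) :=
        Real.rpow_le_rpow_of_exponent_ge h3 h2 (by linarith)
      rw [ENNReal.ofReal_rpow_of_pos h3, Real.rpow_neg h3.le,
        show (4 : ℝ≥0∞) = ENNReal.ofReal 4 by simp]
      apply ENNReal.ofReal_le_ofReal
      rw [inv_le_comm₀ (Real.rpow_pos_of_pos h3 _) (by norm_num)]
      linarith
    refine mul_le_mul' h4 ?_
    exact le_add_self
  · have h0 : PP i w 0 = (w 0).re := by
      unfold PP
      rw [Fin.succAbove_ne_zero_zero hi]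
      rfl
    refine (aux_young ENNReal.ofReal_ne_top ENNReal.ofReal_ne_top (by linarith)).trans ?_
    rw [show 2 - m + 1/2 = 5/2 - m by ring, sub_zero, h0]
    exact le_self_add.trans (le_mul_of_one_le_left zero_le (by norm_num))

/-- Fix `3/2 < m < 2`. There is `C < ∞` such that for every `z ∈ bD_m`:
`∫_{bD_m} |Re w₁|^{m−2}·|w−z|^{−2} dH³(w) ≤ C`; in particular this integral is finite
for every `z ∈ bD_m` (the integrand is `+∞` where singular). -/
theorem stmt14 (m : ℝ) (hm1 : 3 / 2 < m) (hm2 : m < 2) :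
    ∃ C : ℝ, ∀ z ∈ bDm m,
      (∫⁻ w in bDm m,
          (ENNReal.ofReal |(w 0).re|) ^ (m - 2)
            * (ENNReal.ofReal ‖w - z‖) ^ (-2 : ℝ) ∂μH[3])
        ≤ ENNReal.ofReal C ∧
      (∫⁻ w in bDm m,
          (ENNReal.ofReal |(w 0).re|) ^ (m - 2)
            * (ENNReal.ofReal ‖w - z‖) ^ (-2 : ℝ) ∂μH[3]) < ⊤ := by
  have hCC : CC m < ⊤ := by
    unfold CC
    have h1 := M1_lt (5/2 - m) (by linarith)
    have h2 := M1_lt (1/2) (by norm_num)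
    have h3 := M1_lt (3/4) (by norm_num)
    exact ENNReal.mul_lt_top (ENNReal.add_lt_top.mpr ⟨ENNReal.add_lt_top.mpr ⟨h1, h1⟩, h2⟩)
      (ENNReal.mul_lt_top h3 h3)
  set K : ℝ≥0∞ := 8 * ((27 : ℝ≥0∞) ^ (3:ℝ) * (4 * CC m)) with hK
  have hKt : K < ⊤ := by
    refine ENNReal.mul_lt_top (by simp) (ENNReal.mul_lt_top ?_ (ENNReal.mul_lt_top (by simp) hCC))
    exact ENNReal.rpow_lt_top_of_nonneg (by norm_num) (by simp)
  have main : ∀ z ∈ bDm m, (∫⁻ w in bDm m,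
          (ENNReal.ofReal |(w 0).re|) ^ (m - 2)
            * (ENNReal.ofReal ‖w - z‖) ^ (-2 : ℝ) ∂μH[3]) ≤ K := by
    intro z hz
    refine (lintegral_mono_set (cover hm1 hm2)).trans ?_
    refine (lintegral_iUnion_le _ _).trans ?_
    rw [tsum_fintype]
    have hp : ∀ i ∈ (Finset.univ : Finset (Fin 4 × Bool)), (∫⁻ w in SS m i.1 i.2,
          (ENNReal.ofReal |(w 0).re|) ^ (m - 2)
            * (ENNReal.ofReal ‖w - z‖) ^ (-2 : ℝ) ∂μH[3])
          ≤ (27 : ℝ≥0∞) ^ (3:ℝ) * (4 * CC m) := by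
      intro i _
      have hg : Measurable (fun x => 4 * GG m (PP i.1 z) x) := (GG_meas m _).const_mul 4
      have h1 := SS_push hm1 hm2 i.1 i.2 _ hg
      rw [lintegral_const_mul _ (GG_meas m _)] at h1
      refine le_trans ?_ (h1.trans ?_)
      · refine setLIntegral_mono (hg.comp (PP_meas i.1)) ?_
        intro w hw
        exact pt_bound hm1 hm2 i.1 i.2 hw hz
      · gcongr
        exact GG_int m _ (fun j => cc_bd hm1 hm2 hz _)
    refine (Finset.sum_le_card_nsmul _ _ _ hp).trans ?_
    simp [hK]
  refine ⟨K.toReal, fun z hz => ⟨?_, (main z hz).trans_lt hKt⟩⟩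
  rw [ENNReal.ofReal_toReal hKt.ne]
  exact main z hz

end
end

section
/- Fix m with 3/2 < m < 2 and β with 0 < β < (m−1)/2. There exist constants C < ∞ and ε₀ > 0 such that for every z ∈ bD_m and every 0 < ε < ε₀: ∫_{bD_m} |Re w₁|^{m−2} · | Δ(w, z+εN(z))^{−1} − Δ(w,z)^{−1} | dH³(w) ≤ C·ε^β. -/
open MeasureTheory Complex
open scoped ENNReal

noncomputable section

lemma lint_prod (n : ℕ) (μ : Fin n → Measure ℝ) [∀ i, SigmaFinite (μ i)]
    (φ : Fin n → ℝ → ℝ≥0∞) (hφ : ∀ i, Measurable (φ i)) :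
    ∫⁻ x, ∏ i, φ i (x i) ∂(Measure.pi μ) = ∏ i, ∫⁻ t, φ i t ∂(μ i) := by
  induction n with
  | zero => simp
  | succ n ih =>
    have h := ih (fun i => μ i.succ) (fun i => φ i.succ) (fun i => hφ _)
    have e := (measurePreserving_piFinSuccAbove μ 0).symm
    rw [← e.lintegral_comp_emb (MeasurableEquiv.measurableEmbedding _)]
    simp only [MeasurableEquiv.piFinSuccAbove_symm_apply, Fin.prod_univ_succ, Fin.insertNthEquiv,
      Equiv.coe_fn_mk, Fin.insertNth_zero, Fin.cons_zero, Fin.cons_succ, Fin.zero_succAbove,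
      cast_eq]
    rw [lintegral_prod_mul (f := φ 0) (g := fun y : Fin n → ℝ => ∏ i, φ i.succ (y i))
      (hφ 0).aemeasurable (Measurable.aemeasurable (by fun_prop)), h]

lemma chart (P : Set C2) (f : C2 → Fin 3 → ℝ) (hf : Continuous f) (K : NNReal)
    (hK : ∀ x ∈ P, ∀ y ∈ P, dist x y ≤ K * dist (f x) (f y))
    (hbox : ∀ x ∈ P, ∀ i, |f x i| ≤ 1) (φ : Fin 3 → ℝ → ℝ≥0∞) (hφ : ∀ i, Measurable (φ i)) :
    ∫⁻ w in P, ∏ i, φ i (f w i) ∂μH[3] ≤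
      (K : ℝ≥0∞) ^ (3 : ℝ) * ∏ i, ∫⁻ t in Set.Icc (-1 : ℝ) 1, φ i t := by
  have key : Measure.map f ((μH[3] : Measure C2).restrict P) ≤
      (K : ℝ≥0∞) ^ (3 : ℝ) • Measure.pi
        (fun _ : Fin 3 => (volume : Measure ℝ).restrict (Set.Icc (-1 : ℝ) 1)) := by
    rw [Measure.le_iff]
    intro A hA
    rw [Measure.map_apply hf.measurable hA, Measure.restrict_apply (hf.measurable hA)]
    set B := f ⁻¹' A ∩ P
    have hBP : B ⊆ P := Set.inter_subset_right
    have hinj : Set.InjOn f B := by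
      intro x hx y hy hxy
      have := hK x (hBP hx) y (hBP hy)
      rw [hxy, dist_self, mul_zero] at this
      exact dist_le_zero.1 this
    have hL : LipschitzOnWith K (Function.invFunOn f B) (f '' B) := by
      apply LipschitzOnWith.of_dist_le_mul
      rintro _ ⟨x, hx, rfl⟩ _ ⟨y, hy, rfl⟩
      rw [hinj.leftInvOn_invFunOn hx, hinj.leftInvOn_invFunOn hy]
      exact hK x (hBP hx) y (hBP hy)
    have h1 := hL.hausdorffMeasure_image_le (d := 3) (by norm_num)
    rw [hinj.leftInvOn_invFunOn.image_image] at h1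
    refine h1.trans ?_
    have h3 : (μH[3] : Measure (Fin 3 → ℝ)) = volume := by
      have := hausdorffMeasure_pi_real (ι := Fin 3)
      simpa using this
    rw [h3, Measure.smul_apply, smul_eq_mul, ← Measure.restrict_pi_pi, ← volume_pi,
      Measure.restrict_apply hA]
    gcongr
    rintro _ ⟨x, hx, rfl⟩
    refine ⟨hx.1, fun i _ => ?_⟩
    exact abs_le.1 (hbox x hx.2 i)
  have hm : Measurable (fun x : Fin 3 → ℝ => ∏ i, φ i (x i)) := by fun_prop
  calc ∫⁻ w in P, ∏ i, φ i (f w i) ∂μH[3]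
      = ∫⁻ x, ∏ i, φ i (x i) ∂(Measure.map f ((μH[3] : Measure C2).restrict P)) := by
        rw [lintegral_map hm hf.measurable]
    _ ≤ _ := lintegral_mono' key le_rfl
    _ = _ := by rw [lintegral_smul_measure, lint_prod _ _ _ hφ]; rfl

lemma ennrpow_anti {x y : ℝ≥0∞} {s : ℝ} (hs : 0 ≤ s) (h : x ≤ y) : y ^ (-s) ≤ x ^ (-s) := by
  rw [ENNReal.rpow_neg, ENNReal.rpow_neg]
  exact ENNReal.inv_le_inv.2 (ENNReal.rpow_le_rpow h hs)

lemma one_dim (s : ℝ) (hs0 : 0 ≤ s) (hs : s < 1) : ∃ M : ℝ≥0∞, M < ⊤ ∧ ∀ a : ℝ,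
    ∫⁻ t in Set.Icc (-1 : ℝ) 1, (ENNReal.ofReal |t - a|) ^ (-s) ≤ M := by
  set F : ℝ → ℝ≥0∞ := fun t => (Set.Icc (-1 : ℝ) 1).indicator
    (fun t => (ENNReal.ofReal |t|) ^ (-s)) t with hF
  have hFm : Measurable F := by
    apply Measurable.indicator _ measurableSet_Icc
    fun_prop
  have hFint : ∫⁻ t, F t < ⊤ := by
    rw [hF, lintegral_indicator measurableSet_Icc]
    have h1 : IntegrableOn (fun t : ℝ => |t| ^ (-s)) (Set.Icc (-1) 1) := by
      have h0 : IntegrableOn (fun t : ℝ => |t| ^ (-s)) (Set.Icc 0 1) := by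
        have := intervalIntegral.intervalIntegrable_rpow' (a := 0) (b := 1) (r := -s) (by linarith)
        rw [intervalIntegrable_iff_integrableOn_Icc_of_le (by norm_num)] at this
        refine this.congr_fun (fun t ht => ?_) measurableSet_Icc
        simp only
        rw [abs_of_nonneg ht.1]
      have h0' : IntegrableOn (fun t : ℝ => |t| ^ (-s)) (Set.Icc (-1) 0) := by
        have := h0.comp_neg
        simpa using this
      rw [← Set.Icc_union_Icc_eq_Icc (by norm_num : (-1 : ℝ) ≤ 0) (by norm_num : (0 : ℝ) ≤ 1)]
      exact h0'.union h0
    have h2 := h1.lintegral_lt_top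
    refine lt_of_le_of_lt (le_of_eq ?_) h2
    apply lintegral_congr_ae
    have : ∀ᵐ t : ℝ, t ≠ 0 := by simp [ae_iff]
    filter_upwards [ae_restrict_of_ae this] with t ht
    rw [ENNReal.ofReal_rpow_of_pos (abs_pos.2 ht)]
  refine ⟨(∫⁻ t, F t) + ∫⁻ t in Set.Icc (-1 : ℝ) 1, 1, ?_, fun a => ?_⟩
  · simp [hFint]
  · calc ∫⁻ t in Set.Icc (-1 : ℝ) 1, (ENNReal.ofReal |t - a|) ^ (-s)
        ≤ ∫⁻ t in Set.Icc (-1 : ℝ) 1, (F (t - a) + 1) := by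
          apply lintegral_mono
          intro t
          simp only [hF]
          by_cases h : t - a ∈ Set.Icc (-1 : ℝ) 1
          · rw [Set.indicator_of_mem h]
            exact le_self_add
          · rw [Set.indicator_of_notMem h, zero_add]
            have h1 : 1 ≤ |t - a| := by
              by_contra hc
              push Not at hc
              exact h (abs_le.1 hc.le)
            have := ennrpow_anti hs0 (ENNReal.one_le_ofReal.2 h1)
            simpa using this
      _ = (∫⁻ t in Set.Icc (-1 : ℝ) 1, F (t - a)) + ∫⁻ t in Set.Icc (-1 : ℝ) 1, 1 := by
          rw [lintegral_add_right _ measurable_const]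
      _ ≤ (∫⁻ t, F (t - a)) + ∫⁻ t in Set.Icc (-1 : ℝ) 1, 1 := by
          gcongr
          exact Measure.restrict_le_self
      _ = _ := by rw [lintegral_sub_right_eq_self F a]

lemma one_dim_w (r s : ℝ) (hr0 : 0 ≤ r) (hs0 : 0 ≤ s) (hs : r + s < 1) :
    ∃ M : ℝ≥0∞, M < ⊤ ∧ ∀ a : ℝ,
    ∫⁻ t in Set.Icc (-1 : ℝ) 1, (ENNReal.ofReal |t|) ^ (-r) * (ENNReal.ofReal |t - a|) ^ (-s)
      ≤ M := by
  obtain ⟨M, hM, h⟩ := one_dim (r + s) (by linarith) hs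
  refine ⟨M + M, by simp [hM], fun a => ?_⟩
  calc _ ≤ ∫⁻ t in Set.Icc (-1 : ℝ) 1, ((ENNReal.ofReal |t - 0|) ^ (-(r + s)) +
            (ENNReal.ofReal |t - a|) ^ (-(r + s))) := by
        apply lintegral_mono
        intro t
        simp only [sub_zero]
        rcases le_total (ENNReal.ofReal |t|) (ENNReal.ofReal |t - a|) with hle | hle
        · refine le_trans ?_ le_self_add
          rw [ENNReal.rpow_neg _ (r + s), ENNReal.rpow_add_of_nonneg _ _ hr0 hs0,
            ENNReal.mul_inv (by right; simp [hs0]) (by left; simp [hr0]),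
            ← ENNReal.rpow_neg, ← ENNReal.rpow_neg]
          exact mul_le_mul' le_rfl (ennrpow_anti hs0 hle)
        · refine le_trans ?_ le_add_self
          rw [ENNReal.rpow_neg _ (r + s), ENNReal.rpow_add_of_nonneg _ _ hr0 hs0,
            ENNReal.mul_inv (by right; simp [hs0]) (by left; simp [hr0]),
            ← ENNReal.rpow_neg, ← ENNReal.rpow_neg]
          exact mul_le_mul' (ennrpow_anti hr0 hle) le_rfl
    _ = _ := by rw [lintegral_add_right _ (by fun_prop)]
    _ ≤ _ := add_le_add (h 0) (h a)

/-- derivative of `|u|^m` -/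
def dA (m u : ℝ) : ℝ := m * |u| ^ (m - 1) * Real.sign u

lemma dA_eq (m u : ℝ) : dA m u = m * |u| ^ (m - 2) * u := by
  unfold dA
  rcases lt_trichotomy u 0 with h | h | h
  · rw [Real.sign_of_neg h, show m - 1 = (m - 2) + 1 by ring,
      Real.rpow_add_one (abs_pos.2 h.ne).ne', abs_of_neg h]
    ring
  · simp [h]
  · rw [Real.sign_of_pos h, show m - 1 = (m - 2) + 1 by ring,
      Real.rpow_add_one (abs_pos.2 h.ne').ne', abs_of_pos h]
    ring

lemma dA_neg (m u : ℝ) : dA m (-u) = - dA m u := by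
  rw [dA_eq, dA_eq, abs_neg]; ring

lemma dA_pos_eq (m u : ℝ) (hm1 : 3 / 2 < m) (hu : 0 ≤ u) : dA m u = m * u ^ (m - 1) := by
  unfold dA
  rcases hu.eq_or_lt with h | h
  · rw [← h, abs_zero, Real.zero_rpow (by linarith)]; simp
  · rw [Real.sign_of_pos h, abs_of_pos h]; ring

lemma dA_mono_pos (m : ℝ) (hm1 : 3 / 2 < m) (hm2 : m < 2) (s t : ℝ) (hs : 0 ≤ s) (hst : s ≤ t)
    (ht : t ≤ 1) : 3 / 4 * (t - s) ≤ dA m t - dA m s := by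
  rw [dA_pos_eq m t hm1 (by linarith), dA_pos_eq m s hm1 hs]
  rcases (hs.trans hst).eq_or_lt with h | h
  · have : s = 0 := by linarith
    rw [← h, this]; simp
  · have hr : s = t * (1 + (s / t - 1)) := by field_simp; ring
    have hq : 0 ≤ s / t := by positivity
    have hq1 : s / t ≤ 1 := (div_le_one h).2 hst
    have h1 := rpow_one_add_le_one_add_mul_self (s := s / t - 1) (by linarith) (p := m - 1)
      (by linarith) (by linarith)
    have h2 : s ^ (m - 1) = t ^ (m - 1) * (1 + (s / t - 1)) ^ (m - 1) := by
      rw [← Real.mul_rpow h.le (by linarith), ← hr]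
    have h3 : t ≤ t ^ (m - 1) := by
      have := Real.rpow_le_rpow_of_exponent_ge h ht (show m - 1 ≤ 1 by linarith)
      simpa using this
    have h4 : t - s = t * (1 - s / t) := by field_simp
    rw [h2, h4]
    set q := s / t
    set T := t ^ (m - 1)
    have h5 : T * (1 + (q - 1)) ^ (m - 1) ≤ T * (1 + (m - 1) * (q - 1)) := by gcongr
    have h6 : t * (1 - q) ≤ T * (1 - q) := by gcongr
    have h7 : 0 ≤ T * (1 - q) := le_trans (mul_nonneg h.le (by linarith)) h6
    have h8 : m * (T * (1 + (q - 1)) ^ (m - 1)) ≤ m * (T * (1 + (m - 1) * (q - 1))) := by gcongr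
    have h9 : 3 / 4 ≤ m * (m - 1) := by nlinarith
    have h10 : 3 / 4 * (T * (1 - q)) ≤ m * (m - 1) * (T * (1 - q)) := by gcongr
    nlinarith

lemma dA_mono (m : ℝ) (hm1 : 3 / 2 < m) (hm2 : m < 2) (s t : ℝ) (hs : -1 ≤ s) (hst : s ≤ t)
    (ht : t ≤ 1) : 3 / 4 * (t - s) ≤ dA m t - dA m s := by
  rcases le_total 0 s with h | h
  · exact dA_mono_pos m hm1 hm2 s t h hst ht
  · have h0 : dA m 0 = 0 := by simp [dA]
    rcases le_total t 0 with h' | h'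
    · have := dA_mono_pos m hm1 hm2 (-t) (-s) (by linarith) (by linarith) (by linarith)
      rw [dA_neg, dA_neg] at this
      linarith
    · have h1 := dA_mono_pos m hm1 hm2 0 (-s) le_rfl (by linarith) (by linarith)
      have h2 := dA_mono_pos m hm1 hm2 0 t le_rfl h' ht
      rw [dA_neg] at h1
      linarith

lemma convA (m : ℝ) (hm1 : 3 / 2 < m) (hm2 : m < 2) (u t : ℝ) (hu : |u| ≤ 1) (ht : |t| ≤ 1) :
    |u| ^ m + dA m u * (t - u) + 3 / 8 * (t - u) ^ 2 ≤ |t| ^ m := by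
  have hd : ∀ x : ℝ, HasDerivAt (fun x : ℝ => |x| ^ m - 3 / 8 * x ^ 2) (dA m x - 3 / 4 * x) x := by
    intro x
    have h1 := hasDerivAt_abs_rpow x (p := m) (by linarith)
    rw [← dA_eq] at h1
    have h2 := ((hasDerivAt_pow 2 x).const_mul (3 / 8 : ℝ))
    refine (h1.sub h2).congr_deriv ?_
    norm_num
    ring
  have hc : ConvexOn ℝ (Set.Icc (-1 : ℝ) 1) (fun x : ℝ => |x| ^ m - 3 / 8 * x ^ 2) := by
    apply MonotoneOn.convexOn_of_deriv (convex_Icc _ _)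
    · exact fun x _ => (hd x).continuousAt.continuousWithinAt
    · exact fun x _ => (hd x).differentiableAt.differentiableWithinAt
    · intro x hx y hy hxy
      rw [interior_Icc] at hx hy
      rw [(hd x).deriv, (hd y).deriv]
      have := dA_mono m hm1 hm2 x y hx.1.le hxy hy.2.le
      linarith
  rcases lt_trichotomy u t with h | h | h
  · have := hc.le_slope_of_hasDerivAt (abs_le.1 hu) (abs_le.1 ht) h (hd u)
    rw [slope_def_field, le_div_iff₀ (by linarith)] at this
    nlinarith
  · subst h; simp
  · have := hc.slope_le_of_hasDerivAt (abs_le.1 ht) (abs_le.1 hu) h (hd u)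
    rw [slope_def_field, div_le_iff₀ (by linarith)] at this
    nlinarith

lemma dA_abs_le (m u : ℝ) (hm1 : 3 / 2 < m) (hm2 : m < 2) (hu : |u| ≤ 1) : |dA m u| ≤ 2 := by
  unfold dA
  have h1 : |u| ^ (m - 1) ≤ 1 := Real.rpow_le_one (abs_nonneg _) hu (by linarith)
  have h0 : 0 ≤ |u| ^ (m - 1) := by positivity
  have h2 : |Real.sign u| ≤ 1 := by
    rcases Real.sign_apply_eq u with h | h | h <;> rw [h] <;> norm_num
  rw [abs_mul, abs_mul, abs_of_nonneg h0, abs_of_pos (by linarith : 0 < m)]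
  have : m * |u| ^ (m - 1) ≤ 2 := by nlinarith
  have : m * |u| ^ (m - 1) * |Real.sign u| ≤ m * |u| ^ (m - 1) * 1 := by gcongr
  linarith

lemma absm_lip (m : ℝ) (hm1 : 3 / 2 < m) (hm2 : m < 2) (u t : ℝ) (hu : |u| ≤ 1) (ht : |t| ≤ 1) :
    |(|u| ^ m - |t| ^ m)| ≤ 2 * |u - t| := by
  have h1 := convA m hm1 hm2 u t hu ht
  have h2 := convA m hm1 hm2 t u ht hu
  have h3 : dA m u * (u - t) ≤ 2 * |u - t| := by
    refine (le_abs_self _).trans ?_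
    rw [abs_mul]; gcongr; exact dA_abs_le m u hm1 hm2 hu
  have h4 : dA m t * (t - u) ≤ 2 * |u - t| := by
    refine (le_abs_self _).trans ?_
    rw [abs_mul, abs_sub_comm]; gcongr; exact dA_abs_le m t hm1 hm2 ht
  rw [abs_le]
  constructor <;> nlinarith [sq_nonneg (t - u)]

lemma dA_ge (m u : ℝ) (hm1 : 3 / 2 < m) (hm2 : m < 2) (hu : |u| ≤ 1) (h0 : 0 < u) :
    u ≤ dA m u := by
  rw [dA_pos_eq m u hm1 h0.le]
  rw [abs_of_pos h0] at hu
  have := Real.rpow_le_rpow_of_exponent_ge h0 hu (show m - 1 ≤ 1 by linarith)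
  rw [Real.rpow_one] at this
  nlinarith

lemma absm_antilip (m : ℝ) (hm1 : 3 / 2 < m) (hm2 : m < 2) (σ : ℝ) (hσ : σ = 1 ∨ σ = -1)
    (u t : ℝ) (hu : |u| ≤ 1) (ht : |t| ≤ 1)
    (hu4 : 1 / 4 ≤ σ * u) (ht4 : 1 / 4 ≤ σ * t) :
    |u - t| ≤ 4 * |(|u| ^ m - |t| ^ m)| := by
  have main : ∀ u t : ℝ, |u| ≤ 1 → |t| ≤ 1 → 1 / 4 ≤ u → 1 / 4 ≤ t → u ≤ t →
      |u - t| ≤ 4 * |(|u| ^ m - |t| ^ m)| := by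
    intro u t hu ht hu4 ht4 hle
    have h1 := convA m hm1 hm2 u t hu ht
    have h2 := dA_ge m u hm1 hm2 hu (by linarith)
    rw [abs_sub_comm, abs_of_nonneg (by linarith : 0 ≤ t - u), abs_sub_comm]
    refine le_trans ?_ (mul_le_mul_of_nonneg_left (le_abs_self _) (by norm_num))
    nlinarith [sq_nonneg (t - u)]
  have main2 : ∀ u t : ℝ, |u| ≤ 1 → |t| ≤ 1 → 1 / 4 ≤ u → 1 / 4 ≤ t →
      |u - t| ≤ 4 * |(|u| ^ m - |t| ^ m)| := by
    intro u t hu ht hu4 ht4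
    rcases le_total u t with h | h
    · exact main u t hu ht hu4 ht4 h
    · rw [abs_sub_comm, abs_sub_comm (|u| ^ m)]
      exact main t u ht hu ht4 hu4 h
  rcases hσ with rfl | rfl
  · exact main2 u t hu ht (by linarith) (by linarith)
  · have := main2 (-u) (-t) (by simpa using hu) (by simpa using ht) (by linarith) (by linarith)
    rw [abs_neg, abs_neg, show -u - -t = -(u - t) by ring, abs_neg] at this
    exact this

lemma bDm_eq (m : ℝ) {w : C2} (hw : w ∈ bDm m) :
    |(w 0).re| ^ m + (w 0).im ^ 2 + (w 1).re ^ 2 + (w 1).im ^ 2 = 1 := by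
  have h : rhom m w = 0 := hw
  unfold rhom at h
  rw [← Complex.normSq_eq_norm_sq, Complex.normSq_apply] at h
  linarith

lemma bDm_bd (m : ℝ) (hm1 : 3 / 2 < m) {w : C2} (hw : w ∈ bDm m) :
    |(w 0).re| ≤ 1 ∧ |(w 0).im| ≤ 1 ∧ |(w 1).re| ≤ 1 ∧ |(w 1).im| ≤ 1 := by
  have h := bDm_eq m hw
  have h0 : 0 ≤ |(w 0).re| ^ m := by positivity
  refine ⟨?_, ?_, ?_, ?_⟩
  · by_contra hc
    push Not at hc
    have := Real.one_lt_rpow hc (by linarith : 0 < m)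
    nlinarith [sq_nonneg (w 0).im, sq_nonneg (w 1).re, sq_nonneg (w 1).im]
  all_goals
    apply abs_le_one_iff_mul_self_le_one.2
    nlinarith [sq_nonneg (w 0).im, sq_nonneg (w 1).re, sq_nonneg (w 1).im]

lemma dist_sq (w z : C2) : dist w z ^ 2 = ((w 0).re - (z 0).re) ^ 2 + ((w 0).im - (z 0).im) ^ 2
    + ((w 1).re - (z 1).re) ^ 2 + ((w 1).im - (z 1).im) ^ 2 := by
  rw [EuclideanSpace.dist_eq, Real.sq_sqrt (by positivity)]
  simp only [Fin.sum_univ_two, Complex.dist_eq, ← Complex.normSq_eq_norm_sq, Complex.normSq_apply,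
    Complex.sub_re, Complex.sub_im]
  ring

lemma coord_le (w z : C2) : |(w 0).re - (z 0).re| ≤ dist w z ∧ |(w 0).im - (z 0).im| ≤ dist w z ∧
    |(w 1).re - (z 1).re| ≤ dist w z ∧ |(w 1).im - (z 1).im| ≤ dist w z := by
  have h := dist_sq w z
  refine ⟨?_, ?_, ?_, ?_⟩ <;> apply abs_le_of_sq_le_sq _ dist_nonneg <;> rw [h] <;>
  nlinarith [sq_nonneg ((w 0).re - (z 0).re), sq_nonneg ((w 0).im - (z 0).im),
    sq_nonneg ((w 1).re - (z 1).re), sq_nonneg ((w 1).im - (z 1).im)]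

lemma dist_le_of (w z : C2) (D : ℝ) (hD : 0 ≤ D) (h1 : |(w 0).re - (z 0).re| ≤ 24 * D)
    (h2 : |(w 0).im - (z 0).im| ≤ 24 * D) (h3 : |(w 1).re - (z 1).re| ≤ 24 * D)
    (h4 : |(w 1).im - (z 1).im| ≤ 24 * D) : dist w z ≤ 48 * D := by
  have h := dist_sq w z
  apply le_of_sq_le_sq _ (by positivity : 0 ≤ 48 * D)
  rw [h]
  have := sq_le_sq' (abs_le.1 h1).1 (abs_le.1 h1).2
  have := sq_le_sq' (abs_le.1 h2).1 (abs_le.1 h2).2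
  have := sq_le_sq' (abs_le.1 h3).1 (abs_le.1 h3).2
  have := sq_le_sq' (abs_le.1 h4).1 (abs_le.1 h4).2
  nlinarith

lemma rpow_neg_split (x : ℝ≥0∞) {a b : ℝ} (ha : 0 ≤ a) (hb : 0 ≤ b) :
    x ^ (-(a + b)) = x ^ (-a) * x ^ (-b) := by
  rcases eq_or_ne x ⊤ with rfl | hx
  · rcases ha.eq_or_lt with rfl | ha
    · simp
    · rw [ENNReal.top_rpow_of_neg (by linarith), ENNReal.top_rpow_of_neg (by linarith), zero_mul]
  · rw [ENNReal.rpow_neg _ (a + b), ENNReal.rpow_add_of_nonneg _ _ ha hb,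
      ENNReal.mul_inv (by right; exact ENNReal.rpow_ne_top_of_nonneg hb hx)
        (by left; exact ENNReal.rpow_ne_top_of_nonneg ha hx),
      ← ENNReal.rpow_neg, ← ENNReal.rpow_neg]

def Good (m β : ℝ) (P : Set C2) : Prop := ∃ M : ℝ≥0∞, M < ⊤ ∧ ∀ z : C2,
  ∫⁻ w in P, (ENNReal.ofReal |(w 0).re|) ^ (m - 2) *
    (ENNReal.ofReal (dist w z)) ^ (-(2 + 2 * β)) ∂μH[3] ≤ M

lemma Good.union {m β : ℝ} {P Q : Set C2} (hP : Good m β P) (hQ : Good m β Q) :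
    Good m β (P ∪ Q) := by
  obtain ⟨M, hM, h⟩ := hP
  obtain ⟨N, hN, k⟩ := hQ
  exact ⟨M + N, by simp [hM, hN], fun z =>
    (lintegral_union_le _ _ _).trans (add_le_add (h z) (k z))⟩

lemma Good.mono {m β : ℝ} {P Q : Set C2} (hQ : Good m β Q) (h : P ⊆ Q) :
    Good m β P := by
  obtain ⟨N, hN, k⟩ := hQ
  exact ⟨N, hN, fun z => (lintegral_mono_set h).trans (k z)⟩

lemma goodB (m β : ℝ) (hm1 : 3 / 2 < m) (hm2 : m < 2) (hβ0 : 0 < β) (hβ : β < (m - 1) / 2)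
    (P : Set C2) (f : C2 → Fin 3 → ℝ) (hf : Continuous f)
    (hK : ∀ x ∈ P, ∀ y ∈ P, dist x y ≤ 48 * dist (f x) (f y))
    (hbox : ∀ x ∈ P, ∀ i, |f x i| ≤ 1) (h0 : ∀ x, f x 0 = (x 0).re)
    (hd : ∀ x y i, |f x i - f y i| ≤ dist x y) : Good m β P := by
  set η : ℝ := (m - 1 - 2 * β) / 4 with hη
  have hη0 : 0 < η := by rw [hη]; linarith
  have hη1 : η < 1 / 4 := by rw [hη]; linarith
  obtain ⟨M1, hM1, h1⟩ := one_dim_w (2 - m) (2 * β + 2 * η) (by linarith) (by linarith)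
    (by rw [hη]; linarith)
  obtain ⟨M2, hM2, h2⟩ := one_dim (1 - η) (by linarith) (by linarith)
  refine ⟨((48 : NNReal) : ℝ≥0∞) ^ (3 : ℝ) * (M1 * M2 * M2), ?_, fun z => ?_⟩
  · refine ENNReal.mul_lt_top ?_ (ENNReal.mul_lt_top (ENNReal.mul_lt_top hM1 hM2) hM2)
    exact ENNReal.rpow_lt_top_of_nonneg (by norm_num) (by simp)
  · set φ : Fin 3 → ℝ → ℝ≥0∞ := ![fun t => (ENNReal.ofReal |t|) ^ (-(2 - m)) *
        (ENNReal.ofReal |t - f z 0|) ^ (-(2 * β + 2 * η)),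
        fun t => (ENNReal.ofReal |t - f z 1|) ^ (-(1 - η)),
        fun t => (ENNReal.ofReal |t - f z 2|) ^ (-(1 - η))] with hφ
    have hφm : ∀ i, Measurable (φ i) := by
      intro i
      fin_cases i <;> simp [hφ] <;> fun_prop
    have hc := chart P f hf 48 (by simpa using hK) hbox φ hφm
    refine le_trans (lintegral_mono ?_) (hc.trans ?_)
    · intro w
      simp only [hφ, Fin.prod_univ_three]
      simp only [Matrix.cons_val_zero, Matrix.cons_val_one, Matrix.cons_val]
      rw [show (2 + 2 * β) = (2 * β + 2 * η) + (1 - η) + (1 - η) by ring,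
        rpow_neg_split _ (by linarith) (by linarith),
        rpow_neg_split _ (by linarith) (by linarith), h0 w, neg_sub 2 m, ← h0 w, mul_assoc, mul_assoc,
        mul_assoc]
      refine mul_le_mul' le_rfl (mul_le_mul' ?_ (mul_le_mul' ?_ ?_))
      all_goals
        exact ennrpow_anti (by linarith) (ENNReal.ofReal_le_ofReal (hd _ _ _))
    · refine mul_le_mul' le_rfl ?_
      simp only [hφ, Fin.prod_univ_three]
      simp only [Matrix.cons_val_zero, Matrix.cons_val_one, Matrix.cons_val]
      exact mul_le_mul' (mul_le_mul' (h1 _) (h2 _)) (h2 _)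

lemma goodU (m β : ℝ) (hm1 : 3 / 2 < m) (hm2 : m < 2) (hβ0 : 0 < β) (hβ : β < (m - 1) / 2)
    (P : Set C2) (f : C2 → Fin 3 → ℝ) (hf : Continuous f)
    (hK : ∀ x ∈ P, ∀ y ∈ P, dist x y ≤ 48 * dist (f x) (f y))
    (hbox : ∀ x ∈ P, ∀ i, |f x i| ≤ 1) (h0 : ∀ x ∈ P, 1 / 4 ≤ |(x 0).re|)
    (hPm : MeasurableSet P)
    (hd : ∀ x y i, |f x i - f y i| ≤ dist x y) : Good m β P := by
  set q : ℝ := (2 + 2 * β) / 3 with hq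
  have hq0 : 0 ≤ q := by rw [hq]; linarith
  obtain ⟨M2, hM2, h2⟩ := one_dim q hq0 (by rw [hq]; linarith)
  set W : ℝ≥0∞ := (ENNReal.ofReal (1 / 4)) ^ (-(2 - m)) with hW
  have hWt : W < ⊤ := by
    rw [hW, ENNReal.ofReal_rpow_of_pos (by norm_num)]
    exact ENNReal.ofReal_lt_top
  refine ⟨((48 : NNReal) : ℝ≥0∞) ^ (3 : ℝ) * ((W * M2) * M2 * M2), ?_, fun z => ?_⟩
  · refine ENNReal.mul_lt_top ?_ (ENNReal.mul_lt_top (ENNReal.mul_lt_top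
      (ENNReal.mul_lt_top hWt hM2) hM2) hM2)
    exact ENNReal.rpow_lt_top_of_nonneg (by norm_num) (by simp)
  · set φ : Fin 3 → ℝ → ℝ≥0∞ := ![fun t => W *
        (ENNReal.ofReal |t - f z 0|) ^ (-q),
        fun t => (ENNReal.ofReal |t - f z 1|) ^ (-q),
        fun t => (ENNReal.ofReal |t - f z 2|) ^ (-q)] with hφ
    have hφm : ∀ i, Measurable (φ i) := by
      intro i
      fin_cases i <;> simp [hφ] <;> fun_prop
    have hc := chart P f hf 48 (by simpa using hK) hbox φ hφm
    refine le_trans (setLIntegral_mono' hPm ?_) (hc.trans ?_)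
    · intro w hw
      simp only [hφ, Fin.prod_univ_three]
      simp only [Matrix.cons_val_zero, Matrix.cons_val_one, Matrix.cons_val]
      rw [show (2 + 2 * β) = q + q + q by ring,
        rpow_neg_split _ (by linarith) (by linarith),
        rpow_neg_split _ (by linarith) (by linarith), mul_assoc, mul_assoc, mul_assoc]
      refine mul_le_mul' ?_ (mul_le_mul' ?_ (mul_le_mul' ?_ ?_))
      · rw [hW, show m - 2 = -(2 - m) by ring]
        exact ennrpow_anti (by linarith) (ENNReal.ofReal_le_ofReal (h0 w hw))
      all_goals
        exact ennrpow_anti (by linarith) (ENNReal.ofReal_le_ofReal (hd _ _ _))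
    · refine mul_le_mul' le_rfl ?_
      simp only [hφ, Fin.prod_univ_three]
      simp only [Matrix.cons_val_zero, Matrix.cons_val_one, Matrix.cons_val]
      refine mul_le_mul' (mul_le_mul' ?_ (h2 _)) (h2 _)
      rw [lintegral_const_mul _ (by fun_prop)]
      exact mul_le_mul' le_rfl (h2 _)

lemma sq_diff_le (a b D : ℝ) (ha : |a| ≤ 1) (hb : |b| ≤ 1) (h : |a - b| ≤ D) :
    |a ^ 2 - b ^ 2| ≤ 2 * D := by
  rw [show a ^ 2 - b ^ 2 = (a + b) * (a - b) by ring, abs_mul]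
  have : |a + b| ≤ 2 := (abs_add_le a b).trans (by linarith)
  exact mul_le_mul this h (abs_nonneg _) (by norm_num)

lemma antilip_b (m : ℝ) (hm1 : 3 / 2 < m) (hm2 : m < 2) (σ : ℝ) (hσ : σ = 1 ∨ σ = -1)
    (u x y b u' x' y' b' D : ℝ) (hu : |u| ≤ 1) (hu' : |u'| ≤ 1) (hx : |x| ≤ 1) (hx' : |x'| ≤ 1)
    (hy : |y| ≤ 1) (hy' : |y'| ≤ 1) (h : |u| ^ m + x ^ 2 + y ^ 2 + b ^ 2 = 1)
    (h' : |u'| ^ m + x' ^ 2 + y' ^ 2 + b' ^ 2 = 1) (hb : 1 / 2 ≤ σ * b) (hb' : 1 / 2 ≤ σ * b')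
    (h1 : |u - u'| ≤ D) (h2 : |x - x'| ≤ D) (h3 : |y - y'| ≤ D) : |b - b'| ≤ 24 * D := by
  have k1 := absm_lip m hm1 hm2 u u' hu hu'
  have k2 := sq_diff_le x x' D hx hx' h2
  have k3 := sq_diff_le y y' D hy hy' h3
  have k4 : |b ^ 2 - b' ^ 2| ≤ 6 * D := by
    rw [abs_le] at k1 k2 k3 ⊢
    constructor <;> linarith
  rw [show b ^ 2 - b' ^ 2 = (b + b') * (b - b') by ring, abs_mul] at k4
  have k5 : 1 ≤ |b + b'| := by
    rw [le_abs]
    rcases hσ with rfl | rfl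
    · left; linarith
    · right; linarith
  nlinarith [abs_nonneg (b - b'), abs_nonneg (u - u')]

lemma dist_fin3 (f g : Fin 3 → ℝ) (i : Fin 3) : |f i - g i| ≤ dist f g := by
  rw [← Real.dist_eq]; exact dist_le_pi_dist f g i

lemma good_bDm (m β : ℝ) (hm1 : 3 / 2 < m) (hm2 : m < 2) (hβ0 : 0 < β) (hβ : β < (m - 1) / 2) :
    Good m β (bDm m) := by
  have hV : ∀ σ : ℝ, (σ = 1 ∨ σ = -1) → Good m β {w | w ∈ bDm m ∧ 1 / 2 ≤ σ * (w 0).im} := by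
    intro σ hσ
    apply goodB m β hm1 hm2 hβ0 hβ _ (fun w => ![(w 0).re, (w 1).re, (w 1).im])
    · fun_prop
    · rintro w ⟨hw, hwσ⟩ z ⟨hz, hzσ⟩
      set D := dist (![(w 0).re, (w 1).re, (w 1).im] : Fin 3 → ℝ) ![(z 0).re, (z 1).re, (z 1).im]
      have e0 : |(w 0).re - (z 0).re| ≤ D := dist_fin3 ![(w 0).re, (w 1).re, (w 1).im] ![(z 0).re, (z 1).re, (z 1).im] 0
      have e1 : |(w 1).re - (z 1).re| ≤ D := dist_fin3 ![(w 0).re, (w 1).re, (w 1).im] ![(z 0).re, (z 1).re, (z 1).im] 1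
      have e2 : |(w 1).im - (z 1).im| ≤ D := dist_fin3 ![(w 0).re, (w 1).re, (w 1).im] ![(z 0).re, (z 1).re, (z 1).im] 2
      have hD : 0 ≤ D := dist_nonneg
      obtain ⟨a1, a2, a3, a4⟩ := bDm_bd m hm1 hw
      obtain ⟨b1, b2, b3, b4⟩ := bDm_bd m hm1 hz
      have g1 := bDm_eq m hw
      have g2 := bDm_eq m hz
      refine dist_le_of w z D hD (by linarith) ?_ (by linarith) (by linarith)
      exact antilip_b m hm1 hm2 σ hσ _ _ _ _ _ _ _ _ D a1 b1 a3 b3 a4 b4 (by linarith)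
        (by linarith) hwσ hzσ e0 e1 e2
    · rintro w ⟨hw, -⟩ i
      obtain ⟨a1, a2, a3, a4⟩ := bDm_bd m hm1 hw
      fin_cases i <;> simpa
    · simp
    · intro w z i
      obtain ⟨a1, a2, a3, a4⟩ := coord_le w z
      fin_cases i <;> simpa
  have hX : ∀ σ : ℝ, (σ = 1 ∨ σ = -1) → Good m β {w | w ∈ bDm m ∧ 1 / 2 ≤ σ * (w 1).re} := by
    intro σ hσ
    apply goodB m β hm1 hm2 hβ0 hβ _ (fun w => ![(w 0).re, (w 0).im, (w 1).im])
    · fun_prop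
    · rintro w ⟨hw, hwσ⟩ z ⟨hz, hzσ⟩
      set D := dist (![(w 0).re, (w 0).im, (w 1).im] : Fin 3 → ℝ) ![(z 0).re, (z 0).im, (z 1).im]
      have e0 : |(w 0).re - (z 0).re| ≤ D := dist_fin3 ![(w 0).re, (w 0).im, (w 1).im] ![(z 0).re, (z 0).im, (z 1).im] 0
      have e1 : |(w 0).im - (z 0).im| ≤ D := dist_fin3 ![(w 0).re, (w 0).im, (w 1).im] ![(z 0).re, (z 0).im, (z 1).im] 1
      have e2 : |(w 1).im - (z 1).im| ≤ D := dist_fin3 ![(w 0).re, (w 0).im, (w 1).im] ![(z 0).re, (z 0).im, (z 1).im] 2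
      have hD : 0 ≤ D := dist_nonneg
      obtain ⟨a1, a2, a3, a4⟩ := bDm_bd m hm1 hw
      obtain ⟨b1, b2, b3, b4⟩ := bDm_bd m hm1 hz
      have g1 := bDm_eq m hw
      have g2 := bDm_eq m hz
      refine dist_le_of w z D hD (by linarith) (by linarith) ?_ (by linarith)
      exact antilip_b m hm1 hm2 σ hσ _ _ _ _ _ _ _ _ D a1 b1 a2 b2 a4 b4 (by linarith)
        (by linarith) hwσ hzσ e0 e1 e2
    · rintro w ⟨hw, -⟩ i
      obtain ⟨a1, a2, a3, a4⟩ := bDm_bd m hm1 hw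
      fin_cases i <;> simpa
    · simp
    · intro w z i
      obtain ⟨a1, a2, a3, a4⟩ := coord_le w z
      fin_cases i <;> simpa
  have hY : ∀ σ : ℝ, (σ = 1 ∨ σ = -1) → Good m β {w | w ∈ bDm m ∧ 1 / 2 ≤ σ * (w 1).im} := by
    intro σ hσ
    apply goodB m β hm1 hm2 hβ0 hβ _ (fun w => ![(w 0).re, (w 0).im, (w 1).re])
    · fun_prop
    · rintro w ⟨hw, hwσ⟩ z ⟨hz, hzσ⟩
      set D := dist (![(w 0).re, (w 0).im, (w 1).re] : Fin 3 → ℝ) ![(z 0).re, (z 0).im, (z 1).re]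
      have e0 : |(w 0).re - (z 0).re| ≤ D := dist_fin3 ![(w 0).re, (w 0).im, (w 1).re] ![(z 0).re, (z 0).im, (z 1).re] 0
      have e1 : |(w 0).im - (z 0).im| ≤ D := dist_fin3 ![(w 0).re, (w 0).im, (w 1).re] ![(z 0).re, (z 0).im, (z 1).re] 1
      have e2 : |(w 1).re - (z 1).re| ≤ D := dist_fin3 ![(w 0).re, (w 0).im, (w 1).re] ![(z 0).re, (z 0).im, (z 1).re] 2
      have hD : 0 ≤ D := dist_nonneg
      obtain ⟨a1, a2, a3, a4⟩ := bDm_bd m hm1 hw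
      obtain ⟨b1, b2, b3, b4⟩ := bDm_bd m hm1 hz
      have g1 := bDm_eq m hw
      have g2 := bDm_eq m hz
      refine dist_le_of w z D hD (by linarith) (by linarith) (by linarith) ?_
      exact antilip_b m hm1 hm2 σ hσ _ _ _ _ _ _ _ _ D a1 b1 a2 b2 a3 b3 (by linarith)
        (by linarith) hwσ hzσ e0 e1 e2
    · rintro w ⟨hw, -⟩ i
      obtain ⟨a1, a2, a3, a4⟩ := bDm_bd m hm1 hw
      fin_cases i <;> simpa
    · simp
    · intro w z i
      obtain ⟨a1, a2, a3, a4⟩ := coord_le w z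
      fin_cases i <;> simpa
  have hU : ∀ σ : ℝ, (σ = 1 ∨ σ = -1) → Good m β {w | w ∈ bDm m ∧ 1 / 4 ≤ σ * (w 0).re} := by
    intro σ hσ
    apply goodU m β hm1 hm2 hβ0 hβ _ (fun w => ![(w 0).im, (w 1).re, (w 1).im])
    · fun_prop
    · rintro w ⟨hw, hwσ⟩ z ⟨hz, hzσ⟩
      set D := dist (![(w 0).im, (w 1).re, (w 1).im] : Fin 3 → ℝ) ![(z 0).im, (z 1).re, (z 1).im]
      have e0 : |(w 0).im - (z 0).im| ≤ D := dist_fin3 ![(w 0).im, (w 1).re, (w 1).im] ![(z 0).im, (z 1).re, (z 1).im] 0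
      have e1 : |(w 1).re - (z 1).re| ≤ D := dist_fin3 ![(w 0).im, (w 1).re, (w 1).im] ![(z 0).im, (z 1).re, (z 1).im] 1
      have e2 : |(w 1).im - (z 1).im| ≤ D := dist_fin3 ![(w 0).im, (w 1).re, (w 1).im] ![(z 0).im, (z 1).re, (z 1).im] 2
      have hD : 0 ≤ D := dist_nonneg
      obtain ⟨a1, a2, a3, a4⟩ := bDm_bd m hm1 hw
      obtain ⟨b1, b2, b3, b4⟩ := bDm_bd m hm1 hz
      have g1 := bDm_eq m hw
      have g2 := bDm_eq m hz
      refine dist_le_of w z D hD ?_ (by linarith) (by linarith) (by linarith)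
      have k := absm_antilip m hm1 hm2 σ hσ _ _ a1 b1 hwσ hzσ
      have k1 := sq_diff_le _ _ D a2 b2 e0
      have k2 := sq_diff_le _ _ D a3 b3 e1
      have k3 := sq_diff_le _ _ D a4 b4 e2
      have k4 : |(|(w 0).re| ^ m - |(z 0).re| ^ m)| ≤ 6 * D := by
        rw [abs_le] at k1 k2 k3 ⊢
        constructor <;> linarith
      linarith
    · rintro w ⟨hw, -⟩ i
      obtain ⟨a1, a2, a3, a4⟩ := bDm_bd m hm1 hw
      fin_cases i <;> simpa
    · rintro w ⟨hw, hwσ⟩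
      rw [le_abs]
      rcases hσ with rfl | rfl
      · left; linarith
      · right; linarith
    · apply IsClosed.measurableSet
      apply IsClosed.inter
      · have hc : Continuous (rhom m) := by
          unfold rhom
          have : Continuous (fun w : C2 => |(w 0).re| ^ m) :=
            Continuous.rpow_const (by fun_prop) (fun _ => Or.inr (by linarith))
          fun_prop
        exact isClosed_eq hc continuous_const
      · exact isClosed_le continuous_const (by fun_prop : Continuous fun w : C2 => σ * (w 0).re)
    · intro w z i
      obtain ⟨a1, a2, a3, a4⟩ := coord_le w z
      fin_cases i <;> simpa
  have hall := (((hV 1 (Or.inl rfl)).union (hV (-1) (Or.inr rfl))).union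
    ((hX 1 (Or.inl rfl)).union (hX (-1) (Or.inr rfl)))).union
    (((hY 1 (Or.inl rfl)).union (hY (-1) (Or.inr rfl))).union
    ((hU 1 (Or.inl rfl)).union (hU (-1) (Or.inr rfl))))
  refine hall.mono ?_
  intro w hw
  have h := bDm_eq m hw
  obtain ⟨a1, a2, a3, a4⟩ := bDm_bd m hm1 hw
  simp only [Set.mem_union, Set.mem_ofPred_eq, hw, true_and]
  by_contra hc
  push Not at hc
  obtain ⟨⟨⟨c1, c2⟩, c3, c4⟩, ⟨c5, c6⟩, c7, c8⟩ := hc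
  have t1 : (w 0).im ^ 2 < 1 / 4 := by nlinarith
  have t2 : (w 1).re ^ 2 < 1 / 4 := by nlinarith
  have t3 : (w 1).im ^ 2 < 1 / 4 := by nlinarith
  have t4 : |(w 0).re| < 1 / 4 := by rw [abs_lt]; constructor <;> linarith
  have t5 : |(w 0).re| ^ m ≤ |(w 0).re| := by
    have := Real.rpow_le_rpow_of_exponent_ge' (abs_nonneg (w 0).re) a1 zero_le_one
      (show 1 ≤ m by linarith)
    simpa using this
  linarith

lemma bDm_meas (m : ℝ) (hm1 : 3 / 2 < m) : MeasurableSet (bDm m) := by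
  apply IsClosed.measurableSet
  have hc : Continuous (rhom m) := by
    unfold rhom
    have : Continuous (fun w : C2 => |(w 0).re| ^ m) :=
      Continuous.rpow_const (by fun_prop) (fun _ => Or.inr (by linarith))
    fun_prop
  exact isClosed_eq hc continuous_const

lemma Delta_re (m : ℝ) (w z : C2) : (Deltam m w z).re = dA m (w 0).re / 2 * ((w 0).re - (z 0).re)
    + (w 0).im * ((w 0).im - (z 0).im) + (w 1).re * ((w 1).re - (z 1).re)
    + (w 1).im * ((w 1).im - (z 1).im) := by
  unfold Deltam dA
  simp only [Complex.add_re, Complex.mul_re, Complex.sub_re, Complex.sub_im, Complex.ofReal_re,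
    Complex.ofReal_im, Complex.I_re, Complex.I_im, Complex.conj_re, Complex.conj_im,
    Complex.mul_im]
  ring

lemma Delta_lower (m : ℝ) (hm1 : 3 / 2 < m) (hm2 : m < 2) {w z : C2} (hw : w ∈ bDm m)
    (hz : z ∈ bDm m) : 3 / 16 * dist w z ^ 2 ≤ (Deltam m w z).re := by
  rw [Delta_re, dist_sq]
  have h1 := bDm_eq m hw
  have h2 := bDm_eq m hz
  have h3 := convA m hm1 hm2 _ _ (bDm_bd m hm1 hw).1 (bDm_bd m hm1 hz).1
  nlinarith [sq_nonneg ((w 0).im - (z 0).im), sq_nonneg ((w 1).re - (z 1).re),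
    sq_nonneg ((w 1).im - (z 1).im)]

/-- numerator of the difference -/
def TT (m : ℝ) (w z : C2) : ℂ :=
  ((dA m (w 0).re / 2 : ℝ) - I * ((w 0).im : ℂ)) * ((dA m (z 0).re : ℝ) + (2 * (z 0).im : ℝ) * I)
    + (starRingEnd ℂ) (w 1) * (2 * z 1)

lemma Delta_diff (m : ℝ) (w z : C2) (ε : ℝ) : Deltam m w (z + ε • Nm m z) =
    Deltam m w z + ((ε * ‖gradRhom m z‖⁻¹ : ℝ) : ℂ) * TT m w z := by
  unfold Deltam TT Nm
  generalize ‖gradRhom m z‖ = g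
  simp only [gradRhom, PiLp.add_apply, PiLp.smul_apply, dA]
  simp
  ring

lemma TT_re (m : ℝ) (w z : C2) : (TT m w z).re = dA m (w 0).re * dA m (z 0).re / 2 +
    2 * ((w 0).im * (z 0).im + (w 1).re * (z 1).re + (w 1).im * (z 1).im) := by
  simp [TT]
  ring

lemma TT_im (m : ℝ) (w z : C2) : (TT m w z).im = dA m (w 0).re * (z 0).im - (w 0).im *
    dA m (z 0).re + 2 * ((w 1).re * (z 1).im - (w 1).im * (z 1).re) := by
  simp [TT]
  ring

lemma abs_mul_le' {a b A B : ℝ} (ha : |a| ≤ A) (hb : |b| ≤ B) : |a * b| ≤ A * B := by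
  rw [abs_mul]
  exact mul_le_mul ha hb (abs_nonneg _) ((abs_nonneg _).trans ha)

lemma TT_norm (m : ℝ) (hm1 : 3 / 2 < m) (hm2 : m < 2) {w z : C2} (hw : w ∈ bDm m)
    (hz : z ∈ bDm m) : ‖TT m w z‖ ≤ 16 := by
  refine (Complex.norm_le_abs_re_add_abs_im _).trans ?_
  obtain ⟨a1, a2, a3, a4⟩ := bDm_bd m hm1 hw
  obtain ⟨b1, b2, b3, b4⟩ := bDm_bd m hm1 hz
  have c1 := dA_abs_le m _ hm1 hm2 a1
  have c2 := dA_abs_le m _ hm1 hm2 b1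
  have h1 : |(TT m w z).re| ≤ 8 := by
    rw [TT_re]
    have e1 := abs_le.1 (abs_mul_le' c1 c2)
    have e2 := abs_le.1 (abs_mul_le' a2 b2)
    have e3 := abs_le.1 (abs_mul_le' a3 b3)
    have e4 := abs_le.1 (abs_mul_le' a4 b4)
    rw [abs_le]; constructor <;> linarith [e1.1, e1.2, e2.1, e2.2, e3.1, e3.2, e4.1, e4.2]
  have h2 : |(TT m w z).im| ≤ 8 := by
    rw [TT_im]
    have e1 := abs_le.1 (abs_mul_le' c1 b2)
    have e2 := abs_le.1 (abs_mul_le' a2 c2)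
    have e3 := abs_le.1 (abs_mul_le' a3 b4)
    have e4 := abs_le.1 (abs_mul_le' a4 b3)
    rw [abs_le]; constructor <;> linarith [e1.1, e1.2, e2.1, e2.2, e3.1, e3.2, e4.1, e4.2]
  linarith

lemma dA_factor (m u : ℝ) (hm1 : 3 / 2 < m) (hm2 : m < 2) (hu : |u| ≤ 1) :
    ∃ c : ℝ, 1 ≤ c ∧ dA m u = c * u := by
  rcases eq_or_ne u 0 with rfl | h
  · exact ⟨1, le_rfl, by simp [dA]⟩
  · refine ⟨m * |u| ^ (m - 2), ?_, dA_eq m u⟩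
    have := Real.one_le_rpow_of_pos_of_le_one_of_nonpos (abs_pos.2 h) hu
      (show m - 2 ≤ 0 by linarith)
    nlinarith

lemma absm_le (m u : ℝ) (hm1 : 3 / 2 < m) (hu : |u| ≤ 1) : |u| ^ m ≤ |u| := by
  have := Real.rpow_le_rpow_of_exponent_ge' (abs_nonneg u) hu zero_le_one
    (show 1 ≤ m by linarith)
  simpa using this

lemma grad_ge (m : ℝ) (hm1 : 3 / 2 < m) (hm2 : m < 2) {z : C2} (hz : z ∈ bDm m) :
    1 ≤ ‖gradRhom m z‖ := by
  have h := dist_sq (gradRhom m z) 0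
  rw [dist_zero_right] at h
  have h' : ‖gradRhom m z‖ ^ 2 = dA m (z 0).re ^ 2 + 4 * (z 0).im ^ 2 + 4 * (z 1).re ^ 2
      + 4 * (z 1).im ^ 2 := by
    rw [h]
    simp only [gradRhom, dA]
    simp
    ring
  have h2 := bDm_eq m hz
  obtain ⟨b1, b2, b3, b4⟩ := bDm_bd m hm1 hz
  obtain ⟨c, hc, hce⟩ := dA_factor m _ hm1 hm2 b1
  have h3 := absm_le m _ hm1 b1
  have h0 : 0 ≤ |(z 0).re| ^ m := by positivity
  have h4 : (|(z 0).re| ^ m) ^ 2 ≤ (z 0).re ^ 2 := by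
    rw [← sq_abs (z 0).re]; gcongr
  have h5 : (z 0).re ^ 2 ≤ dA m (z 0).re ^ 2 := by
    rw [hce, mul_pow]
    exact le_mul_of_one_le_left (sq_nonneg _) (one_le_pow₀ hc)
  set s := |(z 0).re| ^ m
  have h6 : 0 ≤ (1 - s) * (3 - s) := mul_nonneg (by linarith) (by linarith)
  nlinarith [norm_nonneg (gradRhom m z)]

lemma mul_ge_of_close (a b D : ℝ) (hb : |b| ≤ 1) (h : |a - b| ≤ D) : b ^ 2 - D ≤ a * b := by
  have := abs_le.1 (abs_mul_le' h hb)
  nlinarith [this.1]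

set_option maxHeartbeats 1000000 in
lemma TT_nonneg (m : ℝ) (hm1 : 3 / 2 < m) (hm2 : m < 2) {w z : C2} (hw : w ∈ bDm m)
    (hz : z ∈ bDm m) (hd : dist w z ≤ 1 / 16) : 0 ≤ (TT m w z).re := by
  rw [TT_re]
  obtain ⟨a1, a2, a3, a4⟩ := bDm_bd m hm1 hw
  obtain ⟨b1, b2, b3, b4⟩ := bDm_bd m hm1 hz
  obtain ⟨d1, d2, d3, d4⟩ := coord_le w z
  have e2 := mul_ge_of_close _ _ _ b2 (d2.trans hd)
  have e3 := mul_ge_of_close _ _ _ b3 (d3.trans hd)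
  have e4 := mul_ge_of_close _ _ _ b4 (d4.trans hd)
  have g := bDm_eq m hz
  have h3 := absm_le m _ hm1 b1
  have h0 : 0 ≤ |(z 0).re| ^ m := by positivity
  rcases le_or_gt 0 ((w 0).re * (z 0).re) with h | h
  · obtain ⟨c, hc, hce⟩ := dA_factor m _ hm1 hm2 a1
    obtain ⟨c', hc', hce'⟩ := dA_factor m _ hm1 hm2 b1
    have e1 := mul_ge_of_close _ _ _ b1 (d1.trans hd)
    have h4 : (|(z 0).re| ^ m) ^ 2 ≤ (z 0).re ^ 2 := by
      rw [← sq_abs (z 0).re]; gcongr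
    have h5 : (w 0).re * (z 0).re ≤ dA m (w 0).re * dA m (z 0).re := by
      rw [hce, hce']
      have : 1 ≤ c * c' := by nlinarith
      nlinarith
    set s := |(z 0).re| ^ m
    nlinarith [sq_nonneg (1 - s)]
  · have k1 : |(z 0).re| ≤ 1 / 16 := by
      refine le_trans ?_ (d1.trans hd)
      apply sq_le_sq.1
      nlinarith [sq_nonneg (w 0).re]
    have k2 : |dA m (z 0).re| ≤ 1 / 2 := by
      have p : |dA m (z 0).re| ≤ m * |(z 0).re| ^ (m - 1) := by
        unfold dA
        have h2 : |Real.sign (z 0).re| ≤ 1 := by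
          rcases Real.sign_apply_eq (z 0).re with h | h | h <;> rw [h] <;> norm_num
        rw [abs_mul, abs_of_nonneg (by positivity : 0 ≤ m * |(z 0).re| ^ (m - 1))]
        exact mul_le_of_le_one_right (by positivity) h2
      have p2 : |(z 0).re| ^ (m - 1) ≤ |(z 0).re| ^ (1 / 2 : ℝ) :=
        Real.rpow_le_rpow_of_exponent_ge' (abs_nonneg _) b1 (by norm_num) (by linarith)
      have p3 : |(z 0).re| ^ (1 / 2 : ℝ) ≤ 1 / 4 := by
        rw [← Real.sqrt_eq_rpow, Real.sqrt_le_left (by norm_num)]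
        linarith
      have p4 : 0 ≤ |(z 0).re| ^ (m - 1) := by positivity
      have p5 : m * |(z 0).re| ^ (m - 1) ≤ 2 * (1 / 4) :=
        mul_le_mul hm2.le (p2.trans p3) p4 (by norm_num)
      refine p.trans (p5.trans (by norm_num))
    have k3 := (abs_le.1 (abs_mul_le' (dA_abs_le m _ hm1 hm2 a1) k2)).1
    clear h d1 d2 d3 d4 a1 a2 a3 a4 b1 b2 b3 b4 hd
    generalize dA m (w 0).re * dA m (z 0).re = A at *
    generalize |(z 0).re| ^ m = s at *
    linarith

lemma Delta_eps_lower (m : ℝ) (hm1 : 3 / 2 < m) (hm2 : m < 2) {w z : C2} (hw : w ∈ bDm m)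
    (hz : z ∈ bDm m) (ε : ℝ) (h0 : 0 < ε) (hε : ε < 1 / 65536) :
    1 / 16 * dist w z ^ 2 ≤ (Deltam m w (z + ε • Nm m z)).re := by
  have h1 := Delta_lower m hm1 hm2 hw hz
  have hg := grad_ge m hm1 hm2 hz
  have hi : ‖gradRhom m z‖⁻¹ ≤ 1 := inv_le_one_of_one_le₀ hg
  have hi0 : 0 ≤ ‖gradRhom m z‖⁻¹ := by positivity
  rw [Delta_diff, Complex.add_re, Complex.re_ofReal_mul]
  rcases le_total (dist w z) (1 / 16) with h | h
  · have := TT_nonneg m hm1 hm2 hw hz h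
    have : 0 ≤ ε * ‖gradRhom m z‖⁻¹ * (TT m w z).re := by positivity
    nlinarith [sq_nonneg (dist w z)]
  · have hT := (Complex.abs_re_le_norm _).trans (TT_norm m hm1 hm2 hw hz)
    have hp : |ε * ‖gradRhom m z‖⁻¹| ≤ 1 / 65536 := by
      rw [abs_of_nonneg (by positivity)]
      nlinarith
    have := abs_le.1 (abs_mul_le' hp hT)
    nlinarith [this.1]

lemma Delta_diff_norm (m : ℝ) (hm1 : 3 / 2 < m) (hm2 : m < 2) {w z : C2} (hw : w ∈ bDm m)
    (hz : z ∈ bDm m) (ε : ℝ) (h0 : 0 < ε) :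
    ‖Deltam m w z - Deltam m w (z + ε • Nm m z)‖ ≤ 16 * ε := by
  have hg := grad_ge m hm1 hm2 hz
  have hi : ‖gradRhom m z‖⁻¹ ≤ 1 := inv_le_one_of_one_le₀ hg
  have hi0 : 0 ≤ ‖gradRhom m z‖⁻¹ := by positivity
  rw [Delta_diff, sub_add_cancel_left, norm_neg, norm_mul, Complex.norm_real, Real.norm_eq_abs,
    abs_of_nonneg (by positivity)]
  have := TT_norm m hm1 hm2 hw hz
  have h1 : ε * ‖gradRhom m z‖⁻¹ ≤ ε := by nlinarith
  calc _ ≤ ε * 16 := mul_le_mul h1 this (norm_nonneg _) h0.le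
    _ = _ := by ring

lemma interp (β ε d : ℝ) (hβ0 : 0 < β) (hβ1 : β < 1) (h0 : 0 < ε) (hd : 0 < d) (a b : ℂ)
    (ha : 1 / 16 * d ^ 2 ≤ ‖a‖) (hb : 1 / 16 * d ^ 2 ≤ ‖b‖) (hab : ‖a - b‖ ≤ 16 * ε) :
    ‖b⁻¹ - a⁻¹‖ ≤ 4096 * ε ^ β * d ^ (-(2 + 2 * β)) := by
  have hpa : 0 < ‖a‖ := lt_of_lt_of_le (by positivity) ha
  have hpb : 0 < ‖b‖ := lt_of_lt_of_le (by positivity) hb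
  have ha0 : a ≠ 0 := norm_pos_iff.1 hpa
  have hb0 : b ≠ 0 := norm_pos_iff.1 hpb
  have h1 : ‖b⁻¹ - a⁻¹‖ ≤ 4096 * (d ^ 2)⁻¹ := by
    refine (norm_sub_le _ _).trans ?_
    rw [norm_inv, norm_inv]
    have i1 : ‖a‖⁻¹ ≤ (1 / 16 * d ^ 2)⁻¹ := by gcongr
    have i2 : ‖b‖⁻¹ ≤ (1 / 16 * d ^ 2)⁻¹ := by gcongr
    have i3 : (1 / 16 * d ^ 2)⁻¹ = 16 * (d ^ 2)⁻¹ := by rw [mul_inv]; norm_num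
    have : 0 ≤ (d ^ 2)⁻¹ := by positivity
    linarith
  have h2 : ‖b⁻¹ - a⁻¹‖ ≤ 4096 * (ε * ((d ^ 2)⁻¹ * (d ^ 2)⁻¹)) := by
    have : b⁻¹ - a⁻¹ = (a - b) * (a⁻¹ * b⁻¹) := by field_simp
    rw [this, norm_mul, norm_mul, norm_inv, norm_inv]
    have i1 : ‖a‖⁻¹ ≤ (1 / 16 * d ^ 2)⁻¹ := by gcongr
    have i2 : ‖b‖⁻¹ ≤ (1 / 16 * d ^ 2)⁻¹ := by gcongr
    calc _ ≤ 16 * ε * ((1 / 16 * d ^ 2)⁻¹ * (1 / 16 * d ^ 2)⁻¹) := by gcongr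
      _ = _ := by rw [mul_inv]; ring
  set x := ‖b⁻¹ - a⁻¹‖ with hx
  have hx0 : 0 ≤ x := norm_nonneg _
  rcases hx0.eq_or_lt with h | hxp
  · rw [← h]; positivity
  set Q := (d ^ 2)⁻¹ with hQ
  have hQ0 : 0 < Q := by positivity
  calc x = x ^ (1 - β) * x ^ β := by rw [← Real.rpow_add hxp]; simp
    _ ≤ (4096 * Q) ^ (1 - β) * (4096 * (ε * (Q * Q))) ^ β := by
        gcongr
    _ = 4096 * ε ^ β * (Q ^ (1 - β) * (Q ^ β * Q ^ β)) := by
        rw [Real.mul_rpow (by norm_num) hQ0.le, Real.mul_rpow (by norm_num) (by positivity),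
          Real.mul_rpow h0.le (by positivity), Real.mul_rpow hQ0.le hQ0.le]
        have : (4096 : ℝ) = 4096 ^ (1 - β) * 4096 ^ β := by
          rw [← Real.rpow_add (by norm_num)]; simp
        nth_rewrite 3 [this]
        ring
    _ = _ := by
        rw [← Real.rpow_add hQ0, ← Real.rpow_add hQ0, hQ, ← Real.rpow_natCast d 2,
          ← Real.rpow_neg hd.le, ← Real.rpow_mul hd.le]
        congr 2
        push_cast
        ring

/-- Fix `3/2 < m < 2` and `0 < β < (m−1)/2`. There are `C < ∞`, `ε₀ > 0` such that for every
`z ∈ bD_m` and `0 < ε < ε₀`: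
`∫_{bD_m} |Re w₁|^{m−2}·|Δ(w, z+εN(z))⁻¹ − Δ(w,z)⁻¹| dH³(w) ≤ C·ε^β`
(the integrand is `+∞` where singular, e.g. at `w = z`). -/
theorem stmt16 (m β : ℝ) (hm1 : 3 / 2 < m) (hm2 : m < 2)
    (hβ0 : 0 < β) (hβ : β < (m - 1) / 2) :
    ∃ C ε₀ : ℝ, 0 < ε₀ ∧ ∀ z ∈ bDm m, ∀ ε : ℝ, 0 < ε → ε < ε₀ →
      ∫⁻ w in bDm m,
          (ENNReal.ofReal |(w 0).re|) ^ (m - 2) *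
            (if Deltam m w z = 0 ∨ Deltam m w (z + ε • Nm m z) = 0 then (⊤ : ℝ≥0∞)
              else ENNReal.ofReal
                ‖(Deltam m w (z + ε • Nm m z))⁻¹ - (Deltam m w z)⁻¹‖) ∂μH[3]
        ≤ ENNReal.ofReal (C * ε ^ β) := by
  obtain ⟨M, hM, hint⟩ := good_bDm m β hm1 hm2 hβ0 hβ
  refine ⟨4096 * M.toReal, 1 / 65536, by norm_num, fun z hz ε h0 hε => ?_⟩
  have hεβ : 0 < ε ^ β := Real.rpow_pos_of_pos h0 _
  have hpt : ∀ w ∈ bDm m, (ENNReal.ofReal |(w 0).re|) ^ (m - 2) *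
            (if Deltam m w z = 0 ∨ Deltam m w (z + ε • Nm m z) = 0 then (⊤ : ℝ≥0∞)
              else ENNReal.ofReal
                ‖(Deltam m w (z + ε • Nm m z))⁻¹ - (Deltam m w z)⁻¹‖) ≤
      ENNReal.ofReal (4096 * ε ^ β) * ((ENNReal.ofReal |(w 0).re|) ^ (m - 2) *
        (ENNReal.ofReal (dist w z)) ^ (-(2 + 2 * β))) := by
    intro w hw
    rw [mul_left_comm]
    refine mul_le_mul' le_rfl ?_
    have l1 := Delta_lower m hm1 hm2 hw hz
    have l2 := Delta_eps_lower m hm1 hm2 hw hz ε h0 hε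
    rcases (dist_nonneg (x := w) (y := z)).eq_or_lt with h | h
    · rw [← h, ENNReal.ofReal_zero, ENNReal.zero_rpow_of_neg (by linarith), ENNReal.mul_top]
      · exact le_top
      · simp only [ne_eq, ENNReal.ofReal_eq_zero, not_le]
        positivity
    · have hsq : 0 < dist w z ^ 2 := by positivity
      have n1 : Deltam m w z ≠ 0 := by
        intro hc
        rw [hc, Complex.zero_re] at l1
        linarith
      have n2 : Deltam m w (z + ε • Nm m z) ≠ 0 := by
        intro hc
        rw [hc, Complex.zero_re] at l2
        linarith
      rw [if_neg (by tauto), ENNReal.ofReal_rpow_of_pos h, ← ENNReal.ofReal_mul (by positivity)]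
      apply ENNReal.ofReal_le_ofReal
      apply interp β ε (dist w z) hβ0 (by linarith) h0 h
      · have := Complex.re_le_norm (Deltam m w z)
        linarith
      · have := Complex.re_le_norm (Deltam m w (z + ε • Nm m z))
        linarith
      · exact Delta_diff_norm m hm1 hm2 hw hz ε h0
  refine (setLIntegral_mono' (bDm_meas m hm1) hpt).trans ?_
  rw [lintegral_const_mul' _ _ ENNReal.ofReal_ne_top]
  refine (mul_le_mul' le_rfl (hint z)).trans ?_
  rw [show 4096 * M.toReal * ε ^ β = 4096 * ε ^ β * M.toReal by ring,
    ENNReal.ofReal_mul (p := 4096 * ε ^ β) (by positivity), ENNReal.ofReal_toReal hM.ne]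

end
end
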